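/- Let p ≥ √3 and let u be a nonzero global Schwartz solution of the defocusing generalized KdV equation ∂_t u + ∂_x^3 u = ∂_x(|u|^{p-1} u). Then for every function x : ℝ → ℝ, sup_{t ∈ ℝ} ∫_ℝ (x − x(t))² u²(t,x) dx = ∞. -/

import Mathlib

open MeasureTheory Real

/-!
The mass density `u²` and the energy density `½ uₓ² + |u| ^ (p + 1) / (p + 1)` both satisfy
conservation laws `∂ₜ q + ∂ₓ³ q = ∂ₓ j`. Let `M`, `P` be the mass and its first moment and `E`, `Q`
the energy and its first moment, so that `D = E P - M Q` measures how far the center of mass lies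
ahead of the center of energy. Integration by parts and one Cauchy–Schwarz inequality give
`D' ≥ c (∫ |u| ^ (p + 1))²` with `c > 0` as soon as `p ≥ √3`. If the second moment about `x₀ t`
stayed bounded, the mass could not spread out, so `∫ |u| ^ (p + 1)` would stay away from zero and
`D` would grow linearly. The variance `M S - P²` of the mass density has derivative `12 D + O(1)`,
because the flux of the mass density differs from `6` times the energy density by a multiple of
`|u| ^ (p + 1)`, whose first moment about `P / M` is controlled by the variance. Hence the variance
would be unbounded, a contradiction.

A solution is Schwartz at each time but not uniformly in time, so even the conservation of mass and
energy needs an argument. The moment identities are obtained on space-time strips on which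
`M + E` is bounded, by truncating the weights and using Fatou's lemma: the nonnegative mass flux
gains a weight, which makes the energy flux integrable. Since `M + E` is a lower semicontinuous
function of time, Baire's theorem upgrades this to all times.
-/

namespace GKdV
open Filter Topology Set
open scoped ContDiff

/-! ### Functions that are smooth in the space variable -/

/-- The partial derivative in the second (space) variable. -/
noncomputable def dx (g : ℝ → ℝ → ℝ) : ℝ → ℝ → ℝ := fun t => deriv (g t)

/-- Smoothness in the space variable, with all space derivatives continuous on the plane. Nothing is
asked of time derivatives, since `|u| ^ (p - 1) * u` need not have two of them. -/
structure SpaceSmooth (g : ℝ → ℝ → ℝ) : Prop where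
  contDiff : ∀ t, ContDiff ℝ ∞ (g t)
  continuous_iteratedDeriv : ∀ k, Continuous fun q : ℝ × ℝ => iteratedDeriv k (g q.1) q.2

lemma dx_smul (c : ℝ) (g : ℝ → ℝ → ℝ) : dx (c • g) = c • dx g := by
  ext t x
  exact deriv_const_smul_field c (g t)

namespace SpaceSmooth

variable {f g : ℝ → ℝ → ℝ}

lemma continuous (hg : SpaceSmooth g) : Continuous ↿g := by
  simpa only [iteratedDeriv_zero] using! hg.continuous_iteratedDeriv 0

lemma continuous_slice (hg : SpaceSmooth g) (t : ℝ) : Continuous (g t) := (hg.contDiff t).continuous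

lemma contDiffAt (hg : SpaceSmooth g) (n : ℕ) (t x : ℝ) : ContDiffAt ℝ n (g t) x :=
  ((hg.contDiff t).of_le (mod_cast le_top)).contDiffAt

lemma hasDerivAt (hg : SpaceSmooth g) (t x : ℝ) : HasDerivAt (g t) (dx g t x) x :=
  ((hg.contDiff t).differentiable (by simp) x).hasDerivAt

protected lemma dx (hg : SpaceSmooth g) : SpaceSmooth (dx g) where
  contDiff t := ((contDiff_infty_iff_deriv (𝕜 := ℝ)).1 (hg.contDiff t)).2
  continuous_iteratedDeriv k := by
    simpa only [iteratedDeriv_succ'] using! hg.continuous_iteratedDeriv (k + 1)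

lemma of_dx (h₀ : Continuous ↿g) (hd : ∀ t, Differentiable ℝ (g t)) (hg : SpaceSmooth (dx g)) :
    SpaceSmooth g where
  contDiff t := (contDiff_infty_iff_deriv (𝕜 := ℝ)).2 ⟨hd t, hg.contDiff t⟩
  continuous_iteratedDeriv
    | 0 => by simpa only [iteratedDeriv_zero] using! h₀
    | k + 1 => by simpa only [iteratedDeriv_succ'] using! hg.continuous_iteratedDeriv k

lemma dx_add (hf : SpaceSmooth f) (hg : SpaceSmooth g) : dx (f + g) = dx f + dx g := by
  ext t x
  exact ((hf.hasDerivAt t x).add (hg.hasDerivAt t x)).deriv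

lemma dx_mul (hf : SpaceSmooth f) (hg : SpaceSmooth g) : dx (f * g) = dx f * g + f * dx g := by
  ext t x
  exact ((hf.hasDerivAt t x).mul (hg.hasDerivAt t x)).deriv

protected lemma add (hf : SpaceSmooth f) (hg : SpaceSmooth g) : SpaceSmooth (f + g) where
  contDiff t := (hf.contDiff t).add (hg.contDiff t)
  continuous_iteratedDeriv k := by
    simp only [Pi.add_apply, iteratedDeriv_add (hf.contDiffAt k _ _) (hg.contDiffAt k _ _)]
    exact (hf.continuous_iteratedDeriv k).add (hg.continuous_iteratedDeriv k)

protected lemma const_smul (c : ℝ) (hg : SpaceSmooth g) : SpaceSmooth (c • g) where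
  contDiff t := (hg.contDiff t).const_smul c
  continuous_iteratedDeriv k := by
    simp only [Pi.smul_apply, iteratedDeriv_const_smul_field]
    exact (hg.continuous_iteratedDeriv k).const_smul c

protected lemma mul (hf : SpaceSmooth f) (hg : SpaceSmooth g) : SpaceSmooth (f * g) where
  contDiff t := (hf.contDiff t).mul (hg.contDiff t)
  continuous_iteratedDeriv k := by
    simp only [Pi.mul_apply, iteratedDeriv_mul (hf.contDiffAt k _ _) (hg.contDiffAt k _ _)]
    exact continuous_finsetSum _ fun i _ =>
      (continuous_const.mul (hf.continuous_iteratedDeriv i)).mul (hg.continuous_iteratedDeriv _)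

lemma comp_add_const (hg : SpaceSmooth g) (h : ℝ) : SpaceSmooth fun t x => g t (x + h) where
  contDiff t := (hg.contDiff t).comp (contDiff_id.add contDiff_const)
  continuous_iteratedDeriv k := by
    simp only [iteratedDeriv_comp_add_const]
    exact (hg.continuous_iteratedDeriv k).comp
      (continuous_fst.prodMk (continuous_snd.add continuous_const))

end SpaceSmooth

/-- The difference quotient in the space variable. -/
noncomputable def diffQuot (h : ℝ) (g : ℝ → ℝ → ℝ) : ℝ → ℝ → ℝ :=
  fun t x => (g t (x + h) - g t x) / h

lemma dx_diffQuot {g : ℝ → ℝ → ℝ} (hg : SpaceSmooth g) (h : ℝ) :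
    dx (diffQuot h g) = diffQuot h (dx g) := by
  ext t x
  have hshift : HasDerivAt (fun y => g t (y + h)) (dx g t (x + h)) x :=
    (hg.hasDerivAt t (x + h)).comp_add_const x h
  exact ((hshift.sub (hg.hasDerivAt t x)).div_const h).deriv

protected lemma SpaceSmooth.diffQuot {g : ℝ → ℝ → ℝ} (hg : SpaceSmooth g) (h : ℝ) :
    SpaceSmooth (diffQuot h g) := by
  have heq : GKdV.diffQuot h g = h⁻¹ • ((fun t x => g t (x + h)) + (-1 : ℝ) • g) := by
    ext t x
    simp only [GKdV.diffQuot, Pi.smul_apply, Pi.add_apply, smul_eq_mul]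
    ring
  rw [heq]
  exact ((hg.comp_add_const h).add (hg.const_smul (-1))).const_smul h⁻¹

/-! ### Jointly smooth functions -/

section JointlySmooth

variable {g : ℝ → ℝ → ℝ}

lemma hasDerivAt_time_of_contDiff (hg : ContDiff ℝ ∞ ↿g) (t x : ℝ) :
    HasDerivAt (fun s => g s x) (fderiv ℝ ↿g (t, x) (1, 0)) t :=
  HasFDerivAt.comp_hasDerivAt (l := ↿g) (f := fun s => (s, x)) t
    (hg.differentiable (by simp) (t, x)).hasFDerivAt
    ((hasDerivAt_id t).prodMk (hasDerivAt_const t x))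

lemma dx_eq_fderiv (hg : ContDiff ℝ ∞ ↿g) (t x : ℝ) : dx g t x = fderiv ℝ ↿g (t, x) (0, 1) :=
  ((hg.differentiable (by simp) (t, x)).hasFDerivAt.comp_hasDerivAt x
    ((hasDerivAt_const x t).prodMk (hasDerivAt_id x))).deriv

lemma contDiff_fderiv_apply (hg : ContDiff ℝ ∞ ↿g) (v : ℝ × ℝ) :
    ContDiff ℝ ∞ fun q => fderiv ℝ ↿g q v :=
  (hg.fderiv_right (m := ∞) (by simp)).clm_apply contDiff_const

lemma contDiff_dx (hg : ContDiff ℝ ∞ ↿g) : ContDiff ℝ ∞ ↿(dx g) := by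
  have heq : ↿(dx g) = fun q => fderiv ℝ ↿g q (0, 1) := funext fun q => dx_eq_fderiv hg q.1 q.2
  rw [heq]
  exact contDiff_fderiv_apply hg _

lemma spaceSmooth_of_contDiff (hg : ContDiff ℝ ∞ ↿g) : SpaceSmooth g where
  contDiff t := hg.comp (contDiff_const.prodMk contDiff_id)
  continuous_iteratedDeriv k := by
    induction k generalizing g with
    | zero => simpa only [iteratedDeriv_zero] using! hg.continuous
    | succ k ih => simpa only [iteratedDeriv_succ'] using! ih (contDiff_dx hg)

lemma hasDerivAt_time_dx (hg : ContDiff ℝ ∞ ↿g) (t x : ℝ) :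
    HasDerivAt (fun s => dx g s x) (dx (fun s y => deriv (fun r => g r y) s) t x) t := by
  have hd : DifferentiableAt ℝ (fderiv ℝ ↿g) (t, x) :=
    (hg.fderiv_right (m := ∞) (by simp)).differentiable (by simp) _
  have hsecond (v w : ℝ × ℝ) : fderiv ℝ (fun q => fderiv ℝ ↿g q v) (t, x) w
      = fderiv ℝ (fderiv ℝ ↿g) (t, x) w v := by
    simp [fderiv_clm_apply hd (differentiableAt_const v)]
  have hsymm : IsSymmSndFDerivAt ℝ ↿g (t, x) := 
    hg.contDiffAt.isSymmSndFDerivAt (by simpa using! WithTop.coe_le_coe.2 (le_top (a := (2 : ℕ∞))))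
  have hdt : (fun s y => deriv (fun r => g r y) s) = fun s y => fderiv ℝ ↿g (s, y) (1, 0) := by
    ext s y
    exact (hasDerivAt_time_of_contDiff hg s y).deriv
  have htime := hasDerivAt_time_of_contDiff (contDiff_dx hg) t x
  have hdx : ↿(dx g) = fun q => fderiv ℝ ↿g q (0, 1) := funext fun q => dx_eq_fderiv hg q.1 q.2
  rw [hdx, hsecond, hsymm, ← hsecond] at htime
  rw [hdt, dx_eq_fderiv (contDiff_fderiv_apply hg (1, 0))]
  exact htime

end JointlySmooth

/-! ### The nonlinearity -/

lemma hasDerivAt_abs_rpow_mul {p : ℝ} (hp : 1 < p) (y : ℝ) :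
    HasDerivAt (fun z : ℝ => |z| ^ (p - 1) * z) (p * |y| ^ (p - 1)) y := by
  rcases eq_or_ne y 0 with rfl | hy
  · have hc : ContinuousAt (fun z : ℝ => |z| ^ (p - 1)) 0 :=
      continuous_abs.continuousAt.rpow_const (Or.inr (by linarith))
    have hslope : Tendsto (fun z : ℝ => |z| ^ (p - 1)) (𝓝[≠] 0) (𝓝 (p * |0| ^ (p - 1))) := by
      simpa [Real.zero_rpow (by linarith : p - 1 ≠ 0)] using hc.tendsto.mono_left nhdsWithin_le_nhds
    refine hasDerivAt_iff_tendsto_slope.2 (hslope.congr' ?_)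
    filter_upwards [self_mem_nhdsWithin] with z hz
    have hz : z ≠ 0 := hz
    simp [slope_def_field, hz]
  · refine (((hasDerivAt_abs hy).rpow_const (Or.inl (abs_ne_zero.2 hy))).mul
      (hasDerivAt_id y)).congr_deriv ?_
    have hsub : |y| ^ (p - 1 - 1) * |y| = |y| ^ (p - 1) := by
      rw [← Real.rpow_add_one (abs_ne_zero.2 hy), sub_add_cancel]
    have hsign : (SignType.sign y : ℝ) * y = |y| := sign_mul_self y
    simp only [id_eq, mul_one]
    linear_combination (p - 1) * hsub + (p - 1) * |y| ^ (p - 1 - 1) * hsign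

/-! ### Weights and their truncations -/

/-- Smooth weights of polynomial growth `k` each of whose derivatives gains one power of decay,
until it is bounded (the exponent `k - j` is a truncated difference). -/
structure IsWeight (k : ℕ) (φ : ℝ → ℝ) : Prop where
  contDiff : ContDiff ℝ ∞ φ
  bound : ∀ j, ∃ A, ∀ x, |iteratedDeriv j φ x| ≤ A * (1 + |x|) ^ (k - j)

lemma exists_bound_iteratedDeriv {f : ℝ → ℝ} (hf : ContDiff ℝ ∞ f) (hc : HasCompactSupport f)
    (k j : ℕ) : ∃ A, ∀ x, (1 + |x|) ^ k * |iteratedDeriv j f x| ≤ A := by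
  have hcj : HasCompactSupport (iteratedDeriv j f) := by
    induction j with
    | zero => simpa only [iteratedDeriv_zero]
    | succ j ih => simpa only [iteratedDeriv_succ] using! ih.deriv
  have hcont : Continuous fun x => (1 + |x|) ^ k * iteratedDeriv j f x :=
    (by fun_prop : Continuous fun x : ℝ => (1 + |x|) ^ k).mul
      (hf.continuous_iteratedDeriv j (mod_cast le_top))
  obtain ⟨A, hA⟩ := hcont.bounded_above_of_compact_support hcj.mul_left
  refine ⟨A, fun x => (le_of_eq ?_).trans (hA x)⟩
  rw [norm_mul, norm_of_nonneg (by positivity), norm_eq_abs]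

lemma isWeight_pow (k : ℕ) : IsWeight k fun x => x ^ k where
  contDiff := contDiff_id.pow k
  bound j := by
    refine ⟨k.descFactorial j, fun x => ?_⟩
    rw [iteratedDeriv_pow, abs_mul, abs_pow, Nat.abs_cast]
    gcongr
    linarith

lemma integrable_comp_mul_of_abs_le {α : Type*} [MeasurableSpace α] {μ : Measure α} {m : ℕ} {A : ℝ}
    {w : ℝ → ℝ} {X g : α → ℝ} (hw : Continuous w) (hA : ∀ x, |w x| ≤ A * (1 + |x|) ^ m)
    (hX : Measurable X) (hg : Integrable (fun a => (1 + |X a|) ^ m * g a) μ) :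
    Integrable (fun a => w (X a) * g a) μ := by
  have hquot : Measurable fun a => w (X a) / (1 + |X a|) ^ m :=
    (hw.measurable.comp hX).div (by fun_prop)
  refine (hg.bdd_mul hquot.aestronglyMeasurable (c := A) (.of_forall fun a => ?_)).congr
    (.of_forall fun a => ?_)
  · rw [norm_div, norm_eq_abs, norm_of_nonneg (by positivity), div_le_iff₀ (by positivity)]
    exact hA (X a)
  · have hpos : (1 + |X a|) ^ m ≠ 0 := by positivity
    field_simp

lemma integrable_one_add_abs_pow_mul_of_le {α : Type*} [MeasurableSpace α] {μ : Measure α}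
    {j m : ℕ} (hjm : j ≤ m) {X g : α → ℝ} (hX : Measurable X)
    (hg : Integrable (fun a => (1 + |X a|) ^ m * g a) μ) :
    Integrable (fun a => (1 + |X a|) ^ j * g a) μ := by
  refine integrable_comp_mul_of_abs_le (w := fun x => (1 + |x|) ^ j) (A := 1) (by fun_prop)
    (fun x => ?_) hX hg
  rw [one_mul, abs_of_nonneg (by positivity)]
  gcongr
  linarith [abs_nonneg x]

namespace IsWeight

variable {k : ℕ} {φ : ℝ → ℝ}

lemma primitive (hφ : ContDiff ℝ ∞ φ) (hc : HasCompactSupport φ) :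
    IsWeight 0 fun x => ∫ y in (0 : ℝ)..x, φ y := by
  have hderiv (x : ℝ) : HasDerivAt (fun x => ∫ y in (0 : ℝ)..x, φ y) (φ x) x :=
    (hφ.continuous.integral_hasStrictDerivAt 0 x).hasDerivAt
  have hd : deriv (fun x => ∫ y in (0 : ℝ)..x, φ y) = φ := funext fun x => (hderiv x).deriv
  refine ⟨contDiff_infty_iff_deriv.2 ⟨fun x => (hderiv x).differentiableAt, by rwa [hd]⟩,
    fun j => ?_⟩
  simp only [Nat.zero_sub, pow_zero, mul_one]
  rcases j with _ | j
  · refine ⟨∫ y, ‖φ y‖, fun x => ?_⟩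
    rw [iteratedDeriv_zero, ← norm_eq_abs]
    exact (intervalIntegral.norm_integral_le_integral_norm_uIoc).trans
      (setIntegral_le_integral (hφ.continuous.integrable_of_hasCompactSupport hc).norm
        (.of_forall fun y => norm_nonneg _))
  · rw [iteratedDeriv_succ', hd]
    simpa using exists_bound_iteratedDeriv hφ hc 0 j

lemma integrable_mul {α : Type*} [MeasurableSpace α] {μ : Measure α} {m : ℕ} {X g : α → ℝ}
    (hφ : IsWeight k φ) (j : ℕ) (hkm : k - j ≤ m) (hX : Measurable X)
    (hg : Integrable (fun a => (1 + |X a|) ^ m * g a) μ) :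
    Integrable (fun a => iteratedDeriv j φ (X a) * g a) μ := by
  obtain ⟨A, hA⟩ := hφ.bound j
  have hA₀ : 0 ≤ A := by simpa using (abs_nonneg _).trans (hA 0)
  refine integrable_comp_mul_of_abs_le (A := A)
    (hφ.contDiff.continuous_iteratedDeriv j (mod_cast le_top)) (fun x => (hA x).trans ?_) hX hg
  gcongr
  linarith [abs_nonneg x]

end IsWeight

/-- A bump function equal to `1` on `[-1, 1]`. -/
noncomputable def cutoff : ContDiffBump (0 : ℝ) := ⟨1, 2, one_pos, one_lt_two⟩

/-- The weight `φ` cut off at distance of order `R`. -/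
noncomputable def truncate (R : ℝ) (φ : ℝ → ℝ) : ℝ → ℝ := fun x => cutoff (R⁻¹ * x) * φ x

section Truncate

variable {k : ℕ} {φ : ℝ → ℝ} {R : ℝ}

lemma contDiff_truncate (hφ : ContDiff ℝ ∞ φ) (R : ℝ) : ContDiff ℝ ∞ (truncate R φ) :=
  (cutoff.contDiff.comp (contDiff_const.mul contDiff_id)).mul hφ

lemma hasCompactSupport_truncate (hR : R ≠ 0) (φ : ℝ → ℝ) : HasCompactSupport (truncate R φ) :=
  (cutoff.hasCompactSupport.comp_homeomorph (Homeomorph.mulLeft₀ R⁻¹ (inv_ne_zero hR))).mul_right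

lemma abs_truncate_le (R : ℝ) (φ : ℝ → ℝ) (x : ℝ) : |truncate R φ x| ≤ |φ x| := by
  rw [truncate, abs_mul, abs_of_nonneg cutoff.nonneg]
  exact mul_le_of_le_one_left (abs_nonneg _) cutoff.le_one

lemma truncate_eventuallyEq {x : ℝ} (hR : |x| < R) : truncate R φ =ᶠ[𝓝 x] φ := by
  have hR₀ : 0 < R := (abs_nonneg x).trans_lt hR
  filter_upwards [continuous_abs.continuousAt.eventually_lt continuousAt_const hR] with y hy
  have hball : R⁻¹ * y ∈ Metric.closedBall (0 : ℝ) cutoff.rIn := by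
    rw [mem_closedBall_zero_iff, norm_mul, norm_inv, norm_of_nonneg hR₀.le,
      inv_mul_le_iff₀ hR₀, norm_eq_abs]
    simpa [cutoff] using hy.le
  rw [truncate, cutoff.one_of_mem_closedBall hball, one_mul]

lemma tendsto_iteratedDeriv_truncate (φ : ℝ → ℝ) (j : ℕ) (x : ℝ) :
    Tendsto (fun R => iteratedDeriv j (truncate R φ) x) atTop (𝓝 (iteratedDeriv j φ x)) :=
  tendsto_const_nhds.congr' <| (eventually_gt_atTop |x|).mono fun _ hR =>
    ((truncate_eventuallyEq hR).iteratedDeriv_eq j).symm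

lemma exists_bound_iteratedDeriv_cutoff (i : ℕ) :
    ∃ B, ∀ R, 1 ≤ R → ∀ x, |iteratedDeriv i (fun y => cutoff (R⁻¹ * y)) x| * (1 + |x|) ^ i ≤ B := by
  obtain ⟨B, hB⟩ := exists_bound_iteratedDeriv cutoff.contDiff cutoff.hasCompactSupport i i
  refine ⟨B, fun R hR x => le_trans ?_ (hB (R⁻¹ * x))⟩
  have hR₀ : 0 < R := one_pos.trans_le hR
  have hscale : R⁻¹ * (1 + |x|) ≤ 1 + |R⁻¹ * x| := by
    rw [abs_mul, abs_of_pos (inv_pos.2 hR₀), mul_add, mul_one]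
    gcongr
    exact inv_le_one_of_one_le₀ hR
  rw [iteratedDeriv_comp_const_mul cutoff.contDiff, abs_mul, abs_pow, abs_of_pos (inv_pos.2 hR₀)]
  calc R⁻¹ ^ i * |iteratedDeriv i cutoff (R⁻¹ * x)| * (1 + |x|) ^ i
      = (R⁻¹ * (1 + |x|)) ^ i * |iteratedDeriv i cutoff (R⁻¹ * x)| := by rw [mul_pow]; ring
    _ ≤ _ := by gcongr

lemma IsWeight.exists_bound_truncate (hφ : IsWeight k φ) (j : ℕ) :
    ∃ A, ∀ R, 1 ≤ R → ∀ x, |iteratedDeriv j (truncate R φ) x| ≤ A * (1 + |x|) ^ (k - j) := by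
  choose A hA using hφ.bound
  choose B hB using exists_bound_iteratedDeriv_cutoff
  refine ⟨∑ i ∈ Finset.range (j + 1), j.choose i * B i * A (j - i), fun R hR x => ?_⟩
  have hsmooth (i : ℕ) : ContDiffAt ℝ i (fun y => cutoff (R⁻¹ * y)) x :=
    ((cutoff.contDiff (n := i)).comp (contDiff_const.mul contDiff_id)).contDiffAt
  have hφj : ContDiffAt ℝ j φ x := (hφ.contDiff.of_le (mod_cast le_top)).contDiffAt
  have hleibniz : iteratedDeriv j (truncate R φ) x = _ := iteratedDeriv_fun_mul (hsmooth j) hφj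
  rw [hleibniz, Finset.sum_mul]
  refine (Finset.abs_sum_le_sum_abs _ _).trans (Finset.sum_le_sum fun i _ => ?_)
  have hA₀ : 0 ≤ A (j - i) := by simpa using (abs_nonneg _).trans (hA (j - i) 0)
  have hpow : (1 + |x|) ^ (k - (j - i)) ≤ (1 + |x|) ^ i * (1 + |x|) ^ (k - j) := by
    rw [← pow_add]
    exact pow_le_pow_right₀ (by linarith [abs_nonneg x]) (by omega)
  rw [abs_mul, abs_mul, Nat.abs_cast]
  set χ := iteratedDeriv i (fun y => cutoff (R⁻¹ * y)) x
  calc j.choose i * |χ| * |iteratedDeriv (j - i) φ x|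
      ≤ j.choose i * |χ| * (A (j - i) * ((1 + |x|) ^ i * (1 + |x|) ^ (k - j))) := by
        gcongr
        exact (hA _ x).trans (by gcongr)
    _ = j.choose i * (|χ| * (1 + |x|) ^ i) * A (j - i) * (1 + |x|) ^ (k - j) := by ring
    _ ≤ _ := by
        gcongr
        exact hB i R hR x

lemma IsWeight.truncate (hφ : IsWeight k φ) (hR : 1 ≤ R) : IsWeight k (truncate R φ) where
  contDiff := contDiff_truncate hφ.contDiff R
  bound j := (hφ.exists_bound_truncate j).imp fun _ hA => hA R hR

lemma IsWeight.tendsto_integral_truncate {α : Type*} [MeasurableSpace α] {μ : Measure α} {m : ℕ}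
    {X g : α → ℝ} (hφ : IsWeight k φ) (j : ℕ) (hkm : k - j ≤ m) (hX : Measurable X)
    (hg : Integrable (fun a => (1 + |X a|) ^ m * g a) μ) :
    Tendsto (fun R => ∫ a, iteratedDeriv j (GKdV.truncate R φ) (X a) * g a ∂μ) atTop
      (𝓝 (∫ a, iteratedDeriv j φ (X a) * g a ∂μ)) := by
  obtain ⟨A, hA⟩ := hφ.exists_bound_truncate j
  have hA₀ : 0 ≤ A := by simpa using (abs_nonneg _).trans (hA 1 le_rfl 0)
  refine tendsto_integral_filter_of_dominated_convergence (fun a => A * ‖(1 + |X a|) ^ m * g a‖)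
    ?_ ?_ (hg.norm.const_mul A) (.of_forall fun a =>
      (tendsto_iteratedDeriv_truncate φ j (X a)).mul_const (g a))
  · filter_upwards [eventually_ge_atTop 1] with R hR
    exact ((hφ.truncate hR).integrable_mul j hkm hX hg).aestronglyMeasurable
  · filter_upwards [eventually_ge_atTop 1] with R hR
    refine Eventually.of_forall fun a => ?_
    have hw : 1 ≤ 1 + |X a| := by linarith [abs_nonneg (X a)]
    rw [norm_mul, norm_mul, norm_pow, norm_of_nonneg (zero_le_one.trans hw), ← mul_assoc]
    gcongr
    exact (hA R hR (X a)).trans (by gcongr)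

end Truncate

/-! ### Space-time slabs -/

/-- Lebesgue measure on the space-time strip `(a, b] × ℝ`. -/
noncomputable def slab (a b : ℝ) : Measure (ℝ × ℝ) := (volume.restrict (Ioc a b)).prod volume

section Slab

variable {a b : ℝ} {g : ℝ → ℝ → ℝ}

lemma integrable_slab_of_hasCompactSupport (hg : Continuous ↿g) {K : Set ℝ} (hK : IsCompact K)
    (hsupp : ∀ t, ∀ x ∉ K, g t x = 0) : Integrable ↿g (slab a b) := by
  have hslab : slab a b = volume.restrict (Ioc a b ×ˢ univ) := by
    rw [slab, Measure.volume_eq_prod, ← Measure.prod_restrict, Measure.restrict_univ]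
  have hcompact : IntegrableOn ↿g (Ioc a b ×ˢ K) volume :=
    (hg.continuousOn.integrableOn_compact (isCompact_Icc.prod hK)).mono_set
      (prod_mono_left Ioc_subset_Icc_self)
  rw [hslab]
  exact hcompact.of_forall_sdiff_eq_zero (measurableSet_Ioc.prod MeasurableSet.univ)
    fun q hq => hsupp q.1 q.2 fun hqK => hq.2 ⟨hq.1.1, hqK⟩

lemma integral_slab_eq_intervalIntegral (hab : a ≤ b) (hg : Integrable ↿g (slab a b)) :
    ∫ q, g q.1 q.2 ∂slab a b = ∫ t in a..b, ∫ x, g t x := by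
  rw [intervalIntegral.integral_of_le hab]
  exact integral_prod _ hg

end Slab

/-! ### Balance laws -/

lemma integral_mul_deriv_of_hasCompactSupport {φ f f' : ℝ → ℝ} (hφ : ContDiff ℝ 1 φ)
    (hc : HasCompactSupport φ) (hf : ∀ x, HasDerivAt f (f' x) x) (hf' : Continuous f') :
    ∫ x, φ x * f' x = -∫ x, deriv φ x * f x := by
  have hcont : Continuous f := continuous_iff_continuousAt.2 fun x => (hf x).continuousAt
  exact integral_mul_deriv_eq_deriv_mul_of_integrable
    (fun x _ => (hφ.differentiable one_ne_zero x).hasDerivAt) (fun x _ => hf x)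
    ((hφ.continuous.mul hf').integrable_of_hasCompactSupport hc.mul_right)
    (((hφ.continuous_deriv le_rfl).mul hcont).integrable_of_hasCompactSupport hc.deriv.mul_right)
    ((hφ.continuous.mul hcont).integrable_of_hasCompactSupport hc.mul_right)

/-- The pointwise balance law `∂ₜ Q + ∂ₓ³ Q = ∂ₓ J + S` for a density `Q` with flux `J` and
source `S`. -/
structure IsBalanceLaw (Q J S : ℝ → ℝ → ℝ) : Prop where
  density : SpaceSmooth Q
  flux : SpaceSmooth J
  source : SpaceSmooth S
  hasDerivAt : ∀ t x, HasDerivAt (fun s => Q s x) (dx J t x + S t x - dx (dx (dx Q)) t x) t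

namespace IsBalanceLaw

variable {Q Q' J J' S S' H : ℝ → ℝ → ℝ}

protected lemma add (h : IsBalanceLaw Q J S) (h' : IsBalanceLaw Q' J' S') :
    IsBalanceLaw (Q + Q') (J + J') (S + S') where
  density := h.density.add h'.density
  flux := h.flux.add h'.flux
  source := h.source.add h'.source
  hasDerivAt t x := by
    rw [SpaceSmooth.dx_add h.flux h'.flux, SpaceSmooth.dx_add h.density h'.density,
      SpaceSmooth.dx_add h.density.dx h'.density.dx,
      SpaceSmooth.dx_add h.density.dx.dx h'.density.dx.dx]
    refine ((h.hasDerivAt t x).add (h'.hasDerivAt t x)).congr_deriv ?_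
    simp only [Pi.add_apply]
    ring

protected lemma const_smul (c : ℝ) (h : IsBalanceLaw Q J S) :
    IsBalanceLaw (c • Q) (c • J) (c • S) where
  density := h.density.const_smul c
  flux := h.flux.const_smul c
  source := h.source.const_smul c
  hasDerivAt t x := by
    simp only [dx_smul]
    refine ((h.hasDerivAt t x).const_mul c).congr_deriv ?_
    simp only [Pi.smul_apply, smul_eq_mul]
    ring

lemma of_source_add_dx (hJ : SpaceSmooth J) (hS : SpaceSmooth S) (hH : SpaceSmooth H)
    (h : IsBalanceLaw Q J (S + dx H)) : IsBalanceLaw Q (J + H) S where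
  density := h.density
  flux := hJ.add hH
  source := hS
  hasDerivAt t x := by
    rw [SpaceSmooth.dx_add hJ hH]
    refine (h.hasDerivAt t x).congr_deriv ?_
    simp only [Pi.add_apply]
    ring

variable {a b : ℝ} {φ : ℝ → ℝ}

lemma integral_mul_rate (h : IsBalanceLaw Q J S) (hφ : ContDiff ℝ ∞ φ) (hc : HasCompactSupport φ)
    (t : ℝ) : ∫ x, φ x * (dx J t x + S t x - dx (dx (dx Q)) t x)
      = ∫ x, iteratedDeriv 3 φ x * Q t x - iteratedDeriv 1 φ x * J t x
        + iteratedDeriv 0 φ x * S t x := by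
  have hφ' : ContDiff ℝ ∞ (deriv φ) := (contDiff_infty_iff_deriv.1 hφ).2
  have hφ'' : ContDiff ℝ ∞ (deriv (deriv φ)) := (contDiff_infty_iff_deriv.1 hφ').2
  have hφ₃ : ContDiff ℝ ∞ (deriv (deriv (deriv φ))) := (contDiff_infty_iff_deriv.1 hφ'').2
  have hinteg {ψ f : ℝ → ℝ} (hψ : ContDiff ℝ ∞ ψ) (hψc : HasCompactSupport ψ) (hf : Continuous f) :
      Integrable fun x => ψ x * f x :=
    (hψ.continuous.mul hf).integrable_of_hasCompactSupport hψc.mul_right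
  have hparts {ψ : ℝ → ℝ} (hψ : ContDiff ℝ ∞ ψ) (hψc : HasCompactSupport ψ) {g : ℝ → ℝ → ℝ}
      (hg : SpaceSmooth g) : ∫ x, ψ x * dx g t x = -∫ x, deriv ψ x * g t x :=
    integral_mul_deriv_of_hasCompactSupport (hψ.of_le (by simp)) hψc (hg.hasDerivAt t)
      (hg.dx.continuous_slice t)
  have hQ := h.density
  have hJ := hinteg hφ hc (h.flux.dx.continuous_slice t)
  have hS := hinteg hφ hc (h.source.continuous_slice t)
  have hQ₃ := hinteg hφ hc (hQ.dx.dx.dx.continuous_slice t)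
  have hQ₀ := hinteg hφ₃ hc.deriv.deriv.deriv (hQ.continuous_slice t)
  have hJ₀ := hinteg hφ' hc.deriv (h.flux.continuous_slice t)
  have hJS : Integrable fun x => φ x * dx J t x + φ x * S t x := hJ.add hS
  have hQJ : Integrable fun x => deriv (deriv (deriv φ)) x * Q t x - deriv φ x * J t x :=
    hQ₀.sub hJ₀
  simp only [iteratedDeriv_succ, iteratedDeriv_zero, mul_sub, mul_add]
  rw [integral_sub hJS hQ₃, integral_add hJ hS, integral_add hQJ hS,
    integral_sub hQ₀ hJ₀, hparts hφ hc h.flux, hparts hφ hc hQ.dx.dx,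
    hparts hφ' hc.deriv hQ.dx, hparts hφ'' hc.deriv.deriv hQ]
  ring

lemma integral_mul_sub (h : IsBalanceLaw Q J S) (hab : a ≤ b) (hφ : Continuous φ)
    (hc : HasCompactSupport φ) : ∫ x, φ x * (Q b x - Q a x)
      = ∫ t in a..b, ∫ x, φ x * (dx J t x + S t x - dx (dx (dx Q)) t x) := by
  set rate : ℝ → ℝ → ℝ := fun t x => dx J t x + S t x - dx (dx (dx Q)) t x
  have hrate : Continuous ↿rate :=
    (h.flux.dx.continuous.add h.source.continuous).sub h.density.dx.dx.dx.continuous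
  have hslice (x : ℝ) : φ x * (Q b x - Q a x) = ∫ t in a..b, φ x * rate t x := by
    rw [intervalIntegral.integral_const_mul, intervalIntegral.integral_eq_sub_of_hasDerivAt
      (fun t _ => h.hasDerivAt t x)]
    exact (hrate.comp (Continuous.prodMk_left x)).intervalIntegrable a b
  have hinteg : Integrable ↿(fun t x => φ x * rate t x) (slab a b) :=
    integrable_slab_of_hasCompactSupport ((hφ.comp continuous_snd).mul hrate)
      hc.isCompact fun t x hx => by simp [image_eq_zero_of_notMem_tsupport hx]
  simp only [hslice, intervalIntegral.integral_of_le hab]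
  exact (integral_integral_swap hinteg).symm

lemma integral_mul_of_hasCompactSupport (h : IsBalanceLaw Q J S) (hab : a ≤ b)
    (hφ : ContDiff ℝ ∞ φ) (hc : HasCompactSupport φ) :
    ∫ x, φ x * (Q b x - Q a x) = ∫ q, iteratedDeriv 3 φ q.2 * Q q.1 q.2
        - iteratedDeriv 1 φ q.2 * J q.1 q.2 + iteratedDeriv 0 φ q.2 * S q.1 q.2 ∂slab a b := by
  have hzero (j : ℕ) (x : ℝ) (hx : x ∉ tsupport φ) : iteratedDeriv j φ x = 0 := by
    have hφ₀ : φ =ᶠ[𝓝 x] fun _ => 0 := notMem_tsupport_iff_eventuallyEq.1 hx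
    rw [hφ₀.iteratedDeriv_eq j, iteratedDeriv_fun_const_zero]
  have hcont (j : ℕ) : Continuous fun q : ℝ × ℝ => iteratedDeriv j φ q.2 :=
    (hφ.continuous_iteratedDeriv j (mod_cast le_top)).comp continuous_snd
  have hinteg : Integrable ↿(fun t x => iteratedDeriv 3 φ x * Q t x
      - iteratedDeriv 1 φ x * J t x + iteratedDeriv 0 φ x * S t x) (slab a b) :=
    integrable_slab_of_hasCompactSupport ((((hcont 3).mul h.density.continuous).sub
      ((hcont 1).mul h.flux.continuous)).add ((hcont 0).mul h.source.continuous))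
      hc.isCompact fun t x hx => by simp only [hzero _ x hx, zero_mul, sub_zero, add_zero]
  rw [h.integral_mul_sub hab hφ.continuous hc]
  simp only [h.integral_mul_rate hφ hc]
  exact (integral_slab_eq_intervalIntegral hab hinteg).symm

theorem integral_weight_mul_sub {k : ℕ} (h : IsBalanceLaw Q J S) (hab : a ≤ b) (hφ : IsWeight k φ)
    (hk : k ≤ 3) (ha : Integrable fun x => (1 + |x|) ^ k * Q a x)
    (hb : Integrable fun x => (1 + |x|) ^ k * Q b x) (hQ : Integrable ↿Q (slab a b))
    (hJ : Integrable (fun q => (1 + |q.2|) ^ (k - 1) * J q.1 q.2) (slab a b))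
    (hS : Integrable (fun q => (1 + |q.2|) ^ k * S q.1 q.2) (slab a b)) :
    ∫ x, φ x * (Q b x - Q a x) = ∫ q, iteratedDeriv 3 φ q.2 * Q q.1 q.2 ∂slab a b
      - ∫ q, iteratedDeriv 1 φ q.2 * J q.1 q.2 ∂slab a b
      + ∫ q, iteratedDeriv 0 φ q.2 * S q.1 q.2 ∂slab a b := by
  have hab' : Integrable fun x => (1 + |x|) ^ k * (Q b x - Q a x) := by
    simpa only [mul_sub] using! hb.sub ha
  have hQ' : Integrable (fun q => (1 + |q.2|) ^ 0 * Q q.1 q.2) (slab a b) := by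
    simpa only [pow_zero, one_mul] using! hQ
  have hk' : k - 3 ≤ 0 := by omega
  have hlhs := hφ.tendsto_integral_truncate 0 le_rfl measurable_id hab'
  have hrhs := ((hφ.tendsto_integral_truncate 3 hk' measurable_snd hQ').sub
    (hφ.tendsto_integral_truncate 1 le_rfl measurable_snd hJ)).add
    (hφ.tendsto_integral_truncate 0 le_rfl measurable_snd hS)
  simp only [id_eq, iteratedDeriv_zero] at hlhs
  refine tendsto_nhds_unique (hlhs.congr' ?_) hrhs
  filter_upwards [eventually_ge_atTop 1] with R hR
  have hφR := hφ.truncate hR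
  have hQR := hφR.integrable_mul 3 hk' measurable_snd hQ'
  have hJR := hφR.integrable_mul 1 le_rfl measurable_snd hJ
  have hSR := hφR.integrable_mul 0 le_rfl measurable_snd hS
  rw [h.integral_mul_of_hasCompactSupport hab hφR.contDiff
    (hasCompactSupport_truncate (by positivity) φ), ← integral_sub hQR hJR]
  exact integral_add (hQR.sub hJR) hSR

variable {v G : ℝ → ℝ → ℝ}

protected lemma diffQuot (hlaw : IsBalanceLaw v G 0) (h : ℝ) :
    IsBalanceLaw (diffQuot h v) (diffQuot h G) 0 where
  density := hlaw.density.diffQuot h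
  flux := hlaw.flux.diffQuot h
  source := hlaw.source
  hasDerivAt t x := by
    rw [dx_diffQuot hlaw.density, dx_diffQuot hlaw.density.dx, dx_diffQuot hlaw.density.dx.dx,
      dx_diffQuot hlaw.flux]
    refine (((hlaw.hasDerivAt t (x + h)).sub (hlaw.hasDerivAt t x)).div_const h).congr_deriv ?_
    simp only [GKdV.diffQuot, Pi.zero_apply]
    ring

protected lemma sq (hlaw : IsBalanceLaw v G 0) :
    IsBalanceLaw (v ^ 2) ((3 : ℝ) • dx v ^ 2 + (2 : ℝ) • (v * G)) ((-2 : ℝ) • (dx v * G)) := by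
  have hv := hlaw.density
  have hG := hlaw.flux
  have hflux := ((hv.dx.mul hv.dx).const_smul 3).add ((hv.mul hG).const_smul 2)
  simp only [sq]
  refine ⟨hv.mul hv, hflux, (hv.dx.mul hG).const_smul (-2), fun t x => ?_⟩
  refine ((hlaw.hasDerivAt t x).mul (hlaw.hasDerivAt t x)).congr_deriv ?_
  rw [SpaceSmooth.dx_add ((hv.dx.mul hv.dx).const_smul 3) ((hv.mul hG).const_smul 2), dx_smul,
    dx_smul, SpaceSmooth.dx_mul hv.dx hv.dx, SpaceSmooth.dx_mul hv hG, SpaceSmooth.dx_mul hv hv,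
    SpaceSmooth.dx_add (hv.dx.mul hv) (hv.mul hv.dx), SpaceSmooth.dx_mul hv.dx hv,
    SpaceSmooth.dx_mul hv hv.dx,
    SpaceSmooth.dx_add ((hv.dx.dx.mul hv).add (hv.dx.mul hv.dx))
      ((hv.dx.mul hv.dx).add (hv.mul hv.dx.dx)),
    SpaceSmooth.dx_add (hv.dx.dx.mul hv) (hv.dx.mul hv.dx),
    SpaceSmooth.dx_add (hv.dx.mul hv.dx) (hv.mul hv.dx.dx), SpaceSmooth.dx_mul hv.dx.dx hv,
    SpaceSmooth.dx_mul hv.dx hv.dx, SpaceSmooth.dx_mul hv hv.dx.dx]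
  simp only [Pi.add_apply, Pi.mul_apply, Pi.smul_apply, Pi.zero_apply, smul_eq_mul]
  ring

end IsBalanceLaw

/-! ### Conservation laws of the equation -/

/-- `u` is a global Schwartz solution of the defocusing generalized KdV equation of power `p`. -/
structure IsGKdVSolution (p : ℝ) (u : ℝ → ℝ → ℝ) : Prop where
  contDiff : ContDiff ℝ ∞ ↿u
  schwartz : ∀ t, ∃ f : SchwartzMap ℝ ℝ, ∀ x, u t x = f x
  pde : ∀ t x, deriv (fun s => u s x) t + iteratedDeriv 3 (fun y => u t y) x
    = deriv (fun y => |u t y| ^ (p - 1) * u t y) x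

/-- The nonlinear term `|u| ^ (p - 1) * u`. -/
noncomputable def nonlinearity (p : ℝ) (u : ℝ → ℝ → ℝ) : ℝ → ℝ → ℝ :=
  fun t x => |u t x| ^ (p - 1) * u t x

/-- The density of the conserved energy `∫ (½ uₓ² + |u| ^ (p + 1) / (p + 1))`. -/
noncomputable def energyDensity (p : ℝ) (u : ℝ → ℝ → ℝ) : ℝ → ℝ → ℝ :=
  (1 / 2 : ℝ) • dx u ^ 2 + (1 / (p + 1)) • (u * nonlinearity p u)

/-- The flux of the mass density `u²`. -/
noncomputable def massFlux (p : ℝ) (u : ℝ → ℝ → ℝ) : ℝ → ℝ → ℝ :=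
  (3 : ℝ) • dx u ^ 2 + (2 * p / (p + 1)) • (u * nonlinearity p u)

/-- The flux of the energy density. -/
noncomputable def energyFlux (p : ℝ) (u : ℝ → ℝ → ℝ) : ℝ → ℝ → ℝ :=
  (3 / 2 : ℝ) • dx (dx u) ^ 2 + (2 : ℝ) • (dx u * dx (nonlinearity p u))
    + (1 / 2 : ℝ) • nonlinearity p u ^ 2

namespace IsGKdVSolution

variable {p : ℝ} {u : ℝ → ℝ → ℝ}

section

variable (hu : IsGKdVSolution p u)
include hu

lemma spaceSmooth : SpaceSmooth u := spaceSmooth_of_contDiff hu.contDiff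

lemma dx_nonlinearity_eq_time : dx (nonlinearity p u)
    = fun t x => deriv (fun s => u s x) t + dx (dx (dx u)) t x := by
  ext t x
  simpa only [iteratedDeriv_succ, iteratedDeriv_zero] using! (hu.pde t x).symm

lemma contDiff_dx_nonlinearity : ContDiff ℝ ∞ ↿(dx (nonlinearity p u)) := by
  have htime : (fun q : ℝ × ℝ => deriv (fun s => u s q.2) q.1)
      = fun q => fderiv ℝ ↿u q (1, 0) :=
    funext fun q => (hasDerivAt_time_of_contDiff hu.contDiff q.1 q.2).deriv
  rw [hu.dx_nonlinearity_eq_time]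
  change ContDiff ℝ ∞ fun q : ℝ × ℝ => deriv (fun s => u s q.2) q.1 + (↿(dx (dx (dx u)))) q
  simp only [funext_iff] at htime
  simp only [htime]
  exact (contDiff_fderiv_apply hu.contDiff _).add
    (contDiff_dx (contDiff_dx (contDiff_dx hu.contDiff)))

lemma hasDerivAt_time (t x : ℝ) :
    HasDerivAt (fun s => u s x) (dx (nonlinearity p u) t x - dx (dx (dx u)) t x) t := by
  rw [hu.dx_nonlinearity_eq_time, add_sub_cancel_right]
  exact (hasDerivAt_time_of_contDiff hu.contDiff t x).differentiableAt.hasDerivAt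

end

variable (hu : IsGKdVSolution p u) (hp : 1 < p)
include hu hp

lemma dx_nonlinearity (t x : ℝ) :
    dx (nonlinearity p u) t x = p * |u t x| ^ (p - 1) * dx u t x :=
  ((hasDerivAt_abs_rpow_mul hp (u t x)).comp x (hu.spaceSmooth.hasDerivAt t x)).deriv

lemma spaceSmooth_nonlinearity : SpaceSmooth (nonlinearity p u) := by
  have hcont : Continuous fun y : ℝ => |y| ^ (p - 1) * y :=
    continuous_iff_continuousAt.2 fun y => (hasDerivAt_abs_rpow_mul hp y).continuousAt
  refine .of_dx (hcont.comp hu.contDiff.continuous) (fun t x => ?_)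
    (spaceSmooth_of_contDiff hu.contDiff_dx_nonlinearity)
  exact ((hasDerivAt_abs_rpow_mul hp (u t x)).comp x
    (hu.spaceSmooth.hasDerivAt t x)).differentiableAt

lemma isBalanceLaw : IsBalanceLaw u (nonlinearity p u) 0 where
  density := hu.spaceSmooth
  flux := hu.spaceSmooth_nonlinearity hp
  source := by simpa only [zero_smul] using hu.spaceSmooth.const_smul 0
  hasDerivAt t x := by simpa only [Pi.zero_apply, add_zero] using hu.hasDerivAt_time t x

lemma isBalanceLaw_dx : IsBalanceLaw (dx u) (dx (nonlinearity p u)) 0 where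
  density := hu.spaceSmooth.dx
  flux := (hu.spaceSmooth_nonlinearity hp).dx
  source := (hu.isBalanceLaw hp).source
  hasDerivAt t x := by
    have htime : (fun s y => deriv (fun r => u r y) s)
        = dx (nonlinearity p u) + (-1 : ℝ) • dx (dx (dx u)) := by
      ext s y
      simp [(hu.hasDerivAt_time s y).deriv, sub_eq_add_neg]
    refine (hasDerivAt_time_dx hu.contDiff t x).congr_deriv ?_
    rw [htime, SpaceSmooth.dx_add (hu.spaceSmooth_nonlinearity hp).dx
      (hu.spaceSmooth.dx.dx.dx.const_smul _), dx_smul]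
    simp [sub_eq_add_neg]

lemma dx_mul_nonlinearity :
    dx (u * nonlinearity p u) = (p + 1) • (nonlinearity p u * dx u) := by
  ext t x
  rw [SpaceSmooth.dx_mul hu.spaceSmooth (hu.spaceSmooth_nonlinearity hp)]
  simp only [Pi.add_apply, Pi.mul_apply, Pi.smul_apply, smul_eq_mul, hu.dx_nonlinearity hp,
    nonlinearity]
  ring

lemma isBalanceLaw_mass : IsBalanceLaw (u ^ 2) (massFlux p u) 0 := by
  have hp₁ : p + 1 ≠ 0 := by linarith
  have huF := hu.spaceSmooth.mul (hu.spaceSmooth_nonlinearity hp)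
  have hlaw := (hu.isBalanceLaw hp).sq
  have hsource : (-2 : ℝ) • (dx u * nonlinearity p u)
      = 0 + dx ((-(2 / (p + 1))) • (u * nonlinearity p u)) := by
    rw [dx_smul, hu.dx_mul_nonlinearity hp, smul_smul, neg_mul, div_mul_cancel₀ _ hp₁, zero_add,
      mul_comm]
  rw [hsource] at hlaw
  convert IsBalanceLaw.of_source_add_dx hlaw.flux (hu.isBalanceLaw hp).source
    (huF.const_smul _) hlaw using 1
  rw [massFlux, add_assoc, ← add_smul]
  congr 3
  field_simp
  ring

lemma isBalanceLaw_potential :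
    IsBalanceLaw ((1 / (p + 1)) • (u * nonlinearity p u))
      ((1 / 2 : ℝ) • nonlinearity p u ^ 2 + dx (nonlinearity p u) * dx u)
      (dx (nonlinearity p u) * dx (dx u)) := by
  have hp₁ : p + 1 ≠ 0 := by linarith
  have hU := hu.spaceSmooth
  have hF := hu.spaceSmooth_nonlinearity hp
  have hF2 : SpaceSmooth (nonlinearity p u ^ 2) := by simpa only [sq] using hF.mul hF
  have hdx : dx ((1 / (p + 1)) • (u * nonlinearity p u)) = nonlinearity p u * dx u := by
    rw [dx_smul, hu.dx_mul_nonlinearity hp, smul_smul, one_div_mul_cancel hp₁, one_smul]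
  refine ⟨(hU.mul hF).const_smul _, (hF2.const_smul _).add (hF.dx.mul hU.dx), hF.dx.mul hU.dx.dx,
    fun t x => ?_⟩
  have hut := hu.hasDerivAt_time t x
  have hFt := (hasDerivAt_abs_rpow_mul hp (u t x)).comp t hut
  refine ((hut.mul hFt).const_mul (1 / (p + 1))).congr_deriv ?_
  rw [hdx, SpaceSmooth.dx_add (hF2.const_smul _) (hF.dx.mul hU.dx), dx_smul, sq,
    SpaceSmooth.dx_mul hF hF, SpaceSmooth.dx_mul hF.dx hU.dx, SpaceSmooth.dx_mul hF hU.dx,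
    SpaceSmooth.dx_add (hF.dx.mul hU.dx) (hF.mul hU.dx.dx), SpaceSmooth.dx_mul hF.dx hU.dx,
    SpaceSmooth.dx_mul hF hU.dx.dx]
  simp only [Pi.add_apply, Pi.mul_apply, Pi.smul_apply, smul_eq_mul, Function.comp_apply]
  simp only [nonlinearity]
  field_simp
  ring

lemma isBalanceLaw_energy : IsBalanceLaw (energyDensity p u) (energyFlux p u) 0 := by
  convert ((hu.isBalanceLaw_dx hp).sq.const_smul (1 / 2)).add (hu.isBalanceLaw_potential hp) using 1
  · rfl
  · ext t x
    simp only [energyFlux, Pi.add_apply, Pi.mul_apply, Pi.smul_apply, smul_eq_mul, Pi.pow_apply]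
    ring
  · ext t x
    simp only [Pi.zero_apply, Pi.add_apply, Pi.mul_apply, Pi.smul_apply, smul_eq_mul]
    ring

end IsGKdVSolution

/-! ### Decay on time slices -/

lemma exists_abs_le (f : SchwartzMap ℝ ℝ) : ∃ Λ, ∀ x, |f x| ≤ Λ :=
  ⟨_, fun x => SchwartzMap.norm_le_seminorm ℝ f x⟩

lemma exists_schwartz_dx {g : ℝ → ℝ → ℝ} {t : ℝ} (hg : ∃ f : SchwartzMap ℝ ℝ, ∀ x, g t x = f x) :
    ∃ f : SchwartzMap ℝ ℝ, ∀ x, dx g t x = f x := by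
  obtain ⟨f, hf⟩ := hg
  refine ⟨SchwartzMap.derivCLM ℝ ℝ f, fun x => ?_⟩
  rw [SchwartzMap.derivCLM_apply, dx, funext hf]

lemma integrable_one_add_abs_pow_mul_sq (f : SchwartzMap ℝ ℝ) (k : ℕ) :
    Integrable fun x => (1 + |x|) ^ k * f x ^ 2 := by
  obtain ⟨Λ, hΛ⟩ := exists_abs_le f
  have hdom : Integrable fun x : ℝ => 2 ^ k * Λ * (|f x| + |x| ^ k * |f x|) := by
    refine .const_mul (.add ?_ ?_) _
    · simpa using f.integrable_pow_mul volume 0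
    · simpa using f.integrable_pow_mul volume k
  refine hdom.mono' (by have := f.continuous; fun_prop) (.of_forall fun x => ?_)
  have hpow : (1 + |x|) ^ k ≤ 2 ^ k * (1 + |x| ^ k) := by
    refine (add_pow_le zero_le_one (abs_nonneg x) k).trans ?_
    rw [one_pow]
    gcongr
    · norm_num
    · omega
  rw [norm_of_nonneg (by positivity), ← sq_abs (f x), sq]
  calc (1 + |x|) ^ k * (|f x| * |f x|) ≤ 2 ^ k * (1 + |x| ^ k) * (Λ * |f x|) := by
        gcongr
        exact hΛ x
    _ = _ := by ring

lemma sq_le_integral_sq_add_integral_deriv_sq {f f' : ℝ → ℝ} (hd : ∀ x, HasDerivAt f (f' x) x)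
    (hf' : Continuous f') (hf : Integrable fun x => f x ^ 2)
    (hf'sq : Integrable fun x => f' x ^ 2) (x : ℝ) :
    f x ^ 2 ≤ (∫ y, f y ^ 2) + ∫ y, f' y ^ 2 := by
  have hcont : Continuous f := continuous_iff_continuousAt.2 fun y => (hd y).continuousAt
  have hd₂ : ∀ y, HasDerivAt (fun y => f y ^ 2) (2 * (f y * f' y)) y := fun y =>
    ((hd y).pow 2).congr_deriv (by ring)
  have hle : ∀ y, |2 * (f y * f' y)| ≤ f y ^ 2 + f' y ^ 2 := fun y => by
    rw [abs_le]
    constructor <;> nlinarith [sq_nonneg (f y - f' y), sq_nonneg (f y + f' y)]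
  have hsum : Integrable fun y => f y ^ 2 + f' y ^ 2 := hf.add hf'sq
  have hinteg : Integrable fun y => 2 * (f y * f' y) :=
    hsum.mono' (by fun_prop) (.of_forall hle)
  have hzero := tendsto_zero_of_hasDerivAt_of_integrableOn_Iic (a := x) (fun y _ => hd₂ y)
    hinteg.integrableOn hf.integrableOn
  rw [← integral_add hf hf'sq]
  calc f x ^ 2 = ∫ y in Iic x, 2 * (f y * f' y) := by
        rw [integral_Iic_of_hasDerivAt_of_tendsto' (fun y _ => hd₂ y) hinteg.integrableOn hzero,
          sub_zero]
    _ ≤ ∫ y in Iic x, (f y ^ 2 + f' y ^ 2) :=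
        integral_mono hinteg.integrableOn hsum.integrableOn
          fun y => (le_abs_self _).trans (hle y)
    _ ≤ _ := setIntegral_le_integral hsum (.of_forall fun y => by positivity)

lemma mul_nonlinearity_apply (p : ℝ) (u : ℝ → ℝ → ℝ) (t x : ℝ) :
    (u * nonlinearity p u) t x = |u t x| ^ (p - 1) * u t x ^ 2 := by
  simp only [nonlinearity, Pi.mul_apply]
  ring

lemma mul_nonlinearity_nonneg (p : ℝ) (u : ℝ → ℝ → ℝ) (t x : ℝ) :
    0 ≤ (u * nonlinearity p u) t x := by
  rw [mul_nonlinearity_apply]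
  positivity

lemma energyDensity_nonneg {p : ℝ} (hp : 1 < p) (u : ℝ → ℝ → ℝ) (t x : ℝ) :
    0 ≤ energyDensity p u t x := by
  have := mul_nonlinearity_nonneg p u t x
  simp only [energyDensity, Pi.add_apply, Pi.smul_apply, Pi.pow_apply, smul_eq_mul]
  positivity

namespace IsGKdVSolution

variable {p : ℝ} {u : ℝ → ℝ → ℝ} (hu : IsGKdVSolution p u)
include hu

lemma schwartz_dx (t : ℝ) : ∃ f : SchwartzMap ℝ ℝ, ∀ x, dx u t x = f x :=
  exists_schwartz_dx (hu.schwartz t)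

lemma integrable_sq (k : ℕ) (t : ℝ) : Integrable fun x => (1 + |x|) ^ k * u t x ^ 2 := by
  obtain ⟨f, hf⟩ := hu.schwartz t
  simpa only [hf] using integrable_one_add_abs_pow_mul_sq f k

lemma integrable_dx_sq (k : ℕ) (t : ℝ) : Integrable fun x => (1 + |x|) ^ k * dx u t x ^ 2 := by
  obtain ⟨f, hf⟩ := hu.schwartz_dx t
  simpa only [hf] using integrable_one_add_abs_pow_mul_sq f k

variable (hp : 1 < p)
include hp

lemma integrable_mul_nonlinearity (k : ℕ) (t : ℝ) :
    Integrable fun x => (1 + |x|) ^ k * (u * nonlinearity p u) t x := by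
  obtain ⟨f, hf⟩ := hu.schwartz t
  obtain ⟨Λ, hΛ⟩ := exists_abs_le f
  have hcont := (hu.spaceSmooth.mul (hu.spaceSmooth_nonlinearity hp)).continuous_slice t
  refine ((hu.integrable_sq k t).const_mul (Λ ^ (p - 1))).mono'
    (by fun_prop) (.of_forall fun x => ?_)
  have hx : |u t x| ≤ Λ := hf x ▸ hΛ x
  rw [norm_of_nonneg (mul_nonneg (by positivity) (mul_nonlinearity_nonneg p u t x)),
    mul_nonlinearity_apply, mul_left_comm]
  gcongr

lemma integrable_energyDensity (k : ℕ) (t : ℝ) :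
    Integrable fun x => (1 + |x|) ^ k * energyDensity p u t x := by
  have hsum := ((hu.integrable_dx_sq k t).const_mul (1 / 2)).add
    ((hu.integrable_mul_nonlinearity hp k t).const_mul (1 / (p + 1)))
  refine hsum.congr (.of_forall fun x => ?_)
  simp only [energyDensity, Pi.add_apply, Pi.smul_apply, Pi.pow_apply, smul_eq_mul]
  ring

end IsGKdVSolution

/-! ### Integrability on slabs -/

lemma integrable_slab_of_integral_le {a b C : ℝ} {g : ℝ → ℝ → ℝ} (hg : Continuous ↿g)
    (hg₀ : ∀ t x, 0 ≤ g t x) (hinteg : ∀ t, Integrable (g t))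
    (hC : ∀ t ∈ Icc a b, ∫ x, g t x ≤ C) : Integrable ↿g (slab a b) := by
  have hmeas : AEStronglyMeasurable ↿g (slab a b) := hg.aestronglyMeasurable
  refine (integrable_prod_iff hmeas).2 ⟨.of_forall hinteg, ?_⟩
  refine (integrable_const C).mono' hmeas.norm.integral_prod_right' ?_
  filter_upwards [ae_restrict_mem measurableSet_Ioc] with t ht
  rw [norm_of_nonneg (by positivity)]
  simpa only [Function.HasUncurry.uncurry, id, norm_of_nonneg (hg₀ t _)]
    using hC t (Ioc_subset_Icc_self ht)

lemma integrable_of_lintegral_ofReal_le {α : Type*} [MeasurableSpace α] {μ : Measure α} {f : α → ℝ}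
    {c : ℝ} (hc : 0 ≤ c) (hf : AEStronglyMeasurable f μ) (hf₀ : 0 ≤ f)
    (hle : ∫⁻ x, .ofReal (f x) ∂μ ≤ .ofReal c) : Integrable f μ ∧ ∫ x, f x ∂μ ≤ c := by
  have hinteg : Integrable f μ := ⟨hf, by
    rw [hasFiniteIntegral_iff_ofReal (.of_forall hf₀)]
    exact hle.trans_lt ENNReal.ofReal_lt_top⟩
  rw [← ofReal_integral_eq_lintegral_ofReal hinteg (.of_forall hf₀)] at hle
  exact ⟨hinteg, (ENNReal.ofReal_le_ofReal_iff hc).1 hle⟩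

lemma integrable_of_tendsto_of_integral_le {α : Type*} [MeasurableSpace α] {μ : Measure α}
    {F : ℕ → α → ℝ} {f : α → ℝ} {C : ℝ} (hF : ∀ n, Integrable (F n) μ) (hF₀ : ∀ n, 0 ≤ F n)
    (hC : ∀ n, ∫ x, F n x ∂μ ≤ C) (hlim : ∀ x, Tendsto (F · x) atTop (𝓝 (f x))) :
    Integrable f μ ∧ ∫ x, f x ∂μ ≤ C := by
  have hliminf : ∀ x, ENNReal.ofReal (f x) = liminf (fun n => .ofReal (F n x)) atTop := fun x =>
    (((ENNReal.continuous_ofReal.tendsto _).comp (hlim x)).liminf_eq).symm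
  refine integrable_of_lintegral_ofReal_le ((integral_nonneg (hF₀ 0)).trans (hC 0))
    (aestronglyMeasurable_of_tendsto_ae atTop (fun n => (hF n).1) (.of_forall hlim))
    (fun x => ge_of_tendsto' (hlim x) fun n => hF₀ n x) ?_
  simp only [hliminf]
  refine (lintegral_liminf_le' fun n => (hF n).1.aemeasurable.ennreal_ofReal).trans ?_
  refine liminf_le_of_le (by isBoundedDefault) fun c hc => ?_
  obtain ⟨n, hn⟩ := hc.exists
  refine hn.trans ?_
  rw [← ofReal_integral_eq_lintegral_ofReal (hF n) (.of_forall (hF₀ n))]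
  exact ENNReal.ofReal_le_ofReal (hC n)

/-! ### Difference quotients -/

section

variable {f f' : ℝ → ℝ} (hd : ∀ x, HasDerivAt f (f' x) x) (hf' : Continuous f') {h : ℝ}
  (hh : 0 < h)
include hd hf' hh

lemma sq_slope_le_integral (x : ℝ) :
    ((f (x + h) - f x) / h) ^ 2 ≤ ∫ s in (0 : ℝ)..1, f' (x + h * s) ^ 2 := by
  set m := (f (x + h) - f x) / h
  have hcont : Continuous fun s => f' (x + h * s) := by fun_prop
  have hm : ∫ s in (0 : ℝ)..1, f' (x + h * s) = m := by
    have hFTC := intervalIntegral.integral_eq_sub_of_hasDerivAt (fun y _ => hd y)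
      (hf'.intervalIntegrable x (x + h))
    rw [intervalIntegral.integral_comp_add_mul _ hh.ne']
    simp only [mul_zero, add_zero, mul_one, hFTC, smul_eq_mul, m]
    field_simp
  have hvar : 0 ≤ ∫ s in (0 : ℝ)..1, (f' (x + h * s) - m) ^ 2 :=
    intervalIntegral.integral_nonneg zero_le_one fun _ _ => sq_nonneg _
  have hexpand : ∫ s in (0 : ℝ)..1, (f' (x + h * s) - m) ^ 2
      = (∫ s in (0 : ℝ)..1, f' (x + h * s) ^ 2) - m ^ 2 := by
    simp_rw [sub_sq]
    rw [intervalIntegral.integral_add, intervalIntegral.integral_sub,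
      intervalIntegral.integral_mul_const, intervalIntegral.integral_const_mul, hm]
    · simp only [intervalIntegral.integral_const, sub_zero, one_smul]
      ring
    all_goals exact Continuous.intervalIntegrable (by fun_prop) _ _
  linarith

lemma weight_mul_sq_slope_le (hh₁ : h ≤ 1) (k : ℕ) (x : ℝ) :
    (1 + |x|) ^ k * ((f (x + h) - f x) / h) ^ 2
      ≤ ∫ s in (0 : ℝ)..1, 2 ^ k * ((1 + |x + h * s|) ^ k * f' (x + h * s) ^ 2) := by
  refine (mul_le_mul_of_nonneg_left (sq_slope_le_integral hd hf' hh x) (by positivity)).trans ?_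
  rw [← intervalIntegral.integral_const_mul]
  refine intervalIntegral.integral_mono_on zero_le_one
    (Continuous.intervalIntegrable (by fun_prop) _ _)
    (Continuous.intervalIntegrable (by fun_prop) _ _) fun s hs => ?_
  rw [← mul_assoc, ← mul_pow]
  have hshift : |h * s| ≤ 1 := by
    rw [abs_of_nonneg (mul_nonneg hh.le hs.1)]
    exact mul_le_one₀ hh₁ hs.1 hs.2
  have htri := abs_sub (x + h * s) (h * s)
  rw [add_sub_cancel_right] at htri
  gcongr
  linarith [abs_nonneg (x + h * s)]

lemma lintegral_weight_mul_sq_slope_le (hh₁ : h ≤ 1) (k : ℕ) :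
    ∫⁻ x, .ofReal ((1 + |x|) ^ k * ((f (x + h) - f x) / h) ^ 2)
      ≤ ∫⁻ x, .ofReal (2 ^ k * ((1 + |x|) ^ k * f' x ^ 2)) := by
  set w : ℝ → ENNReal := fun y => .ofReal (2 ^ k * ((1 + |y|) ^ k * f' y ^ 2))
  have hw : Measurable w := (Continuous.measurable (by fun_prop)).ennreal_ofReal
  have hpt : ∀ x, ENNReal.ofReal ((1 + |x|) ^ k * ((f (x + h) - f x) / h) ^ 2)
      ≤ ∫⁻ s in Ioc (0 : ℝ) 1, w (x + h * s) := fun x => by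
    refine (ENNReal.ofReal_le_ofReal (weight_mul_sq_slope_le hd hf' hh hh₁ k x)).trans_eq ?_
    rw [intervalIntegral.integral_of_le zero_le_one, ofReal_integral_eq_lintegral_ofReal]
    · exact (Continuous.integrableOn_Icc (by fun_prop)).mono_set Ioc_subset_Icc_self
    · exact .of_forall fun s => by positivity
  calc _ ≤ ∫⁻ x, ∫⁻ s in Ioc (0 : ℝ) 1, w (x + h * s) := lintegral_mono hpt
    _ = ∫⁻ s in Ioc (0 : ℝ) 1, ∫⁻ x, w (x + h * s) :=
        lintegral_lintegral_swap (Measurable.aemeasurable (by fun_prop))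
    _ = ∫⁻ x, w x := by
        simp only [lintegral_add_right_eq_self, lintegral_const, Measure.restrict_apply_univ,
          volume_Ioc, sub_zero, ENNReal.ofReal_one, mul_one]

end

lemma SpaceSmooth.lintegral_weight_mul_sq_diffQuot_le {g : ℝ → ℝ → ℝ} (hg : SpaceSmooth g) {h : ℝ}
    (hh : 0 < h) (hh₁ : h ≤ 1) (k : ℕ) (t : ℝ) :
    ∫⁻ x, .ofReal ((1 + |x|) ^ k * diffQuot h g t x ^ 2)
      ≤ ∫⁻ x, .ofReal (2 ^ k * ((1 + |x|) ^ k * dx g t x ^ 2)) :=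
  lintegral_weight_mul_sq_slope_le (hg.hasDerivAt t) (hg.dx.continuous_slice t) hh hh₁ k

lemma SpaceSmooth.integral_weight_mul_sq_diffQuot_le {g : ℝ → ℝ → ℝ} (hg : SpaceSmooth g) {h : ℝ}
    (hh : 0 < h) (hh₁ : h ≤ 1) {k : ℕ} {t : ℝ}
    (hinteg : Integrable fun x => (1 + |x|) ^ k * dx g t x ^ 2) :
    Integrable (fun x => (1 + |x|) ^ k * diffQuot h g t x ^ 2) ∧
      ∫ x, (1 + |x|) ^ k * diffQuot h g t x ^ 2
        ≤ ∫ x, 2 ^ k * ((1 + |x|) ^ k * dx g t x ^ 2) := by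
  have hcont := (hg.diffQuot h).continuous_slice t
  refine integrable_of_lintegral_ofReal_le (integral_nonneg fun x => by positivity)
    (by fun_prop) (fun x => by positivity) ?_
  rw [ofReal_integral_eq_lintegral_ofReal (hinteg.const_mul _) (.of_forall fun x => by positivity)]
  exact hg.lintegral_weight_mul_sq_diffQuot_le hh hh₁ k t

lemma SpaceSmooth.integral_slab_weight_mul_sq_diffQuot_le {g : ℝ → ℝ → ℝ} (hg : SpaceSmooth g)
    {h a b : ℝ} (hh : 0 < h) (hh₁ : h ≤ 1) {k : ℕ}
    (hinteg : Integrable (fun q : ℝ × ℝ => (1 + |q.2|) ^ k * dx g q.1 q.2 ^ 2) (slab a b)) :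
    Integrable (fun q : ℝ × ℝ => (1 + |q.2|) ^ k * diffQuot h g q.1 q.2 ^ 2) (slab a b) ∧
      ∫ q, (1 + |q.2|) ^ k * diffQuot h g q.1 q.2 ^ 2 ∂slab a b
        ≤ ∫ q, 2 ^ k * ((1 + |q.2|) ^ k * dx g q.1 q.2 ^ 2) ∂slab a b := by
  have hcont : Continuous fun q : ℝ × ℝ => diffQuot h g q.1 q.2 := (hg.diffQuot h).continuous
  have hcont' : Continuous fun q : ℝ × ℝ => dx g q.1 q.2 := hg.dx.continuous
  refine integrable_of_lintegral_ofReal_le (integral_nonneg fun q => by positivity)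
    (by fun_prop) (fun q => by positivity) ?_
  rw [ofReal_integral_eq_lintegral_ofReal (hinteg.const_mul _) (.of_forall fun q => by positivity),
    slab, lintegral_prod _ (by fun_prop), lintegral_prod _ (by fun_prop)]
  exact lintegral_mono fun t => hg.lintegral_weight_mul_sq_diffQuot_le hh hh₁ k t

/-! ### Local smoothing -/

lemma abs_primitive_truncate_sq_le (R x : ℝ) :
    |∫ y in (0 : ℝ)..x, truncate R (· ^ 2) y| ≤ (1 + |x|) ^ 3 := by
  have hbound : ∀ y ∈ uIoc 0 x, ‖truncate R (· ^ 2) y‖ ≤ |x| ^ 2 := fun y hy => by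
    refine (abs_truncate_le R _ y).trans ?_
    rw [abs_pow]
    refine pow_le_pow_left₀ (abs_nonneg y) ?_ 2
    simpa only [sub_zero] using abs_sub_left_of_mem_uIcc (uIoc_subset_uIcc hy)
  refine (intervalIntegral.norm_integral_le_of_norm_le_const hbound).trans ?_
  rw [sub_zero, ← pow_succ]
  gcongr
  linarith

namespace IsBalanceLaw

variable {Q J : ℝ → ℝ → ℝ} {a b : ℝ}

/- The flux is tested against a primitive of the truncated weight `x ^ 2`, of cubic growth. -/
lemma exists_integral_truncate_sq_mul_flux_le (h : IsBalanceLaw Q J 0) (hab : a ≤ b)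
    (ha : Integrable fun x => (1 + |x|) ^ 3 * Q a x)
    (hb : Integrable fun x => (1 + |x|) ^ 3 * Q b x)
    (hQ : Integrable ↿Q (slab a b)) (hJ : Integrable ↿J (slab a b)) :
    ∃ C, ∀ R, 1 ≤ R → ∫ q, truncate R (· ^ 2) q.2 * J q.1 q.2 ∂slab a b ≤ C := by
  obtain ⟨A, hA⟩ := (isWeight_pow 2).exists_bound_truncate 2
  refine ⟨(∫ q, A * |Q q.1 q.2| ∂slab a b) + ∫ x, (1 + |x|) ^ 3 * |Q b x - Q a x|, fun R hR => ?_⟩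
  have hsmooth : ContDiff ℝ ∞ (truncate R (· ^ 2)) := contDiff_truncate (contDiff_id.pow 2) R
  have hφ := IsWeight.primitive hsmooth (hasCompactSupport_truncate (by positivity) _)
  set φ : ℝ → ℝ := fun x => ∫ y in (0 : ℝ)..x, truncate R (· ^ 2) y
  have hderiv : deriv φ = truncate R (· ^ 2) :=
    funext fun x => hsmooth.continuous.deriv_integral _ 0 x
  have hdiff : Integrable fun x => (1 + |x|) ^ 3 * |Q b x - Q a x| := by
    convert (hb.sub ha).norm using 2 with x
    simp only [Pi.sub_apply]
    rw [← mul_sub, norm_mul, norm_of_nonneg (by positivity), norm_eq_abs]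
  have hlaw := h.integral_weight_mul_sub hab hφ (Nat.zero_le 3)
    (integrable_one_add_abs_pow_mul_of_le (Nat.zero_le 3) measurable_id ha)
    (integrable_one_add_abs_pow_mul_of_le (Nat.zero_le 3) measurable_id hb) hQ
    (by simpa using! hJ) (by simp)
  rw [iteratedDeriv_succ', iteratedDeriv_one, hderiv] at hlaw
  simp only [Pi.zero_apply, mul_zero, integral_zero, add_zero] at hlaw
  have hQle : ‖∫ q, iteratedDeriv 2 (truncate R (· ^ 2)) q.2 * Q q.1 q.2 ∂slab a b‖
      ≤ ∫ q, A * |Q q.1 q.2| ∂slab a b :=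
    norm_integral_le_of_norm_le (hQ.norm.const_mul A) <| .of_forall fun q => by
      rw [norm_mul]
      exact mul_le_mul_of_nonneg_right (by simpa using hA R hR q.2) (norm_nonneg _)
  have hφle : ‖∫ x, φ x * (Q b x - Q a x)‖ ≤ ∫ x, (1 + |x|) ^ 3 * |Q b x - Q a x| :=
    norm_integral_le_of_norm_le hdiff <| .of_forall fun x => by
      rw [norm_mul]
      exact mul_le_mul_of_nonneg_right (abs_primitive_truncate_sq_le R x) (norm_nonneg _)
  rw [norm_eq_abs, abs_le] at hQle hφle
  linarith

lemma integrable_sq_mul_flux (h : IsBalanceLaw Q J 0) (hab : a ≤ b)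
    (ha : Integrable fun x => (1 + |x|) ^ 3 * Q a x)
    (hb : Integrable fun x => (1 + |x|) ^ 3 * Q b x)
    (hQ : Integrable ↿Q (slab a b)) (hJ : Integrable ↿J (slab a b)) (hJ₀ : ∀ t x, 0 ≤ J t x) :
    Integrable (fun q => (1 + |q.2|) ^ 2 * J q.1 q.2) (slab a b) := by
  obtain ⟨C, hC⟩ := h.exists_integral_truncate_sq_mul_flux_le hab ha hb hQ hJ
  have hR (n : ℕ) : (1 : ℝ) ≤ n + 1 := by linarith [n.cast_nonneg (α := ℝ)]
  have hsq : Integrable (fun q => q.2 ^ 2 * J q.1 q.2) (slab a b) := by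
    refine (integrable_of_tendsto_of_integral_le
      (F := fun n q => truncate (n + 1) (· ^ 2) q.2 * J q.1 q.2) (fun n => ?_) (fun n q => ?_)
      (fun n => hC _ (hR n)) fun q => ?_).1
    · have hcont : Continuous (truncate (n + 1) (· ^ 2)) :=
        (contDiff_truncate (contDiff_id.pow 2) _).continuous
      obtain ⟨A, hA⟩ := hcont.bounded_above_of_compact_support
        (hasCompactSupport_truncate (by positivity) _)
      refine integrable_comp_mul_of_abs_le (m := 0) (A := A) hcont ?_ measurable_snd ?_
      · simpa using! hA
      · simpa using! hJ
    · exact mul_nonneg (mul_nonneg cutoff.nonneg (sq_nonneg _)) (hJ₀ _ _)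
    · refine Tendsto.mul_const _ ?_
      simpa only [iteratedDeriv_zero] using! (tendsto_iteratedDeriv_truncate (· ^ 2) 0 q.2).comp
        (tendsto_atTop_add_const_right _ 1 tendsto_natCast_atTop_atTop)
  refine ((hJ.add hsq).const_mul 2).mono' ?_ (.of_forall fun q => ?_)
  · exact Continuous.aestronglyMeasurable (by fun_prop) |>.mul hJ.1
  · rw [norm_of_nonneg (mul_nonneg (by positivity) (hJ₀ _ _))]
    change _ ≤ 2 * (J q.1 q.2 + q.2 ^ 2 * J q.1 q.2)
    nlinarith [hJ₀ q.1 q.2, sq_abs q.2, mul_nonneg (hJ₀ q.1 q.2) (sq_nonneg (1 - |q.2|))]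

end IsBalanceLaw

lemma integrable_mul_of_integrable_sq {α : Type*} [MeasurableSpace α] {μ : Measure α} {f g : α → ℝ}
    (hf : AEStronglyMeasurable f μ) (hg : AEStronglyMeasurable g μ)
    (hf₂ : Integrable (fun a => f a ^ 2) μ) (hg₂ : Integrable (fun a => g a ^ 2) μ) :
    Integrable (fun a => f a * g a) μ :=
  ((memLp_two_iff_integrable_sq hf).2 hf₂).integrable_mul ((memLp_two_iff_integrable_sq hg).2 hg₂)

lemma two_mul_integral_mul_ge {α : Type*} [MeasurableSpace α] {μ : Measure α} {f g : α → ℝ}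
    (hf : AEStronglyMeasurable f μ) (hg : AEStronglyMeasurable g μ)
    (hf₂ : Integrable (fun a => f a ^ 2) μ) (hg₂ : Integrable (fun a => g a ^ 2) μ) :
    -((∫ a, f a ^ 2 ∂μ) + ∫ a, g a ^ 2 ∂μ) ≤ 2 * ∫ a, f a * g a ∂μ := by
  rw [← integral_add hf₂ hg₂, ← integral_neg, ← integral_const_mul]
  refine integral_mono (hf₂.add hg₂).neg
    ((integrable_mul_of_integrable_sq hf hg hf₂ hg₂).const_mul 2) fun a => ?_
  linarith [sq_nonneg (f a + g a)]

namespace IsBalanceLaw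

variable {Q J S : ℝ → ℝ → ℝ} {a b : ℝ}

lemma integral_pow_mul_sub {k : ℕ} (h : IsBalanceLaw Q J S) (hab : a ≤ b) (hk : k ≤ 2)
    (ha : Integrable fun x => (1 + |x|) ^ k * Q a x)
    (hb : Integrable fun x => (1 + |x|) ^ k * Q b x) (hQ : Integrable ↿Q (slab a b))
    (hJ : Integrable (fun q => (1 + |q.2|) ^ (k - 1) * J q.1 q.2) (slab a b))
    (hS : Integrable (fun q => (1 + |q.2|) ^ k * S q.1 q.2) (slab a b)) :
    ∫ x, x ^ k * (Q b x - Q a x) = -(k * ∫ q, q.2 ^ (k - 1) * J q.1 q.2 ∂slab a b)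
      + ∫ q, q.2 ^ k * S q.1 q.2 ∂slab a b := by
  have hk₃ : k.descFactorial 3 = 0 := Nat.descFactorial_eq_zero_iff_lt.2 (by omega)
  have hlaw := h.integral_weight_mul_sub hab (isWeight_pow k) (by omega) ha hb hQ hJ hS
  simp only [iteratedDeriv_pow, hk₃, Nat.cast_zero, zero_mul, integral_zero, zero_sub,
    Nat.descFactorial_one, Nat.descFactorial_zero, Nat.cast_one, one_mul, Nat.sub_zero, mul_assoc,
    integral_const_mul] at hlaw
  exact hlaw

section

variable {v G : ℝ → ℝ → ℝ} (h : IsBalanceLaw v G 0) (hab : a ≤ b)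
  (ha : Integrable fun x => (1 + |x|) ^ 1 * v a x ^ 2)
  (hb : Integrable fun x => (1 + |x|) ^ 1 * v b x ^ 2)
  (hv : Integrable (fun q => v q.1 q.2 ^ 2) (slab a b))
  (hdv : Integrable (fun q => dx v q.1 q.2 ^ 2) (slab a b))
  (hG : Integrable (fun q => (1 + |q.2|) ^ 2 * G q.1 q.2 ^ 2) (slab a b))
include h hab ha hb hv hdv hG

lemma integral_mul_sq_sub :
    ∫ x, x * (v b x ^ 2 - v a x ^ 2) = -(3 * ∫ q, dx v q.1 q.2 ^ 2 ∂slab a b)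
      - 2 * (∫ q, v q.1 q.2 * G q.1 q.2 ∂slab a b)
      - 2 * ∫ q, dx v q.1 q.2 * (q.2 * G q.1 q.2) ∂slab a b := by
  have hcv : Continuous fun q : ℝ × ℝ => v q.1 q.2 := h.density.continuous
  have hcdv : Continuous fun q : ℝ × ℝ => dx v q.1 q.2 := h.density.dx.continuous
  have hcG : Continuous fun q : ℝ × ℝ => G q.1 q.2 := h.flux.continuous
  have hG₀ : Integrable (fun q => G q.1 q.2 ^ 2) (slab a b) := by
    simpa using integrable_one_add_abs_pow_mul_of_le (Nat.zero_le 2) measurable_snd hG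
  have hvG : Integrable (fun q => v q.1 q.2 * G q.1 q.2) (slab a b) :=
    integrable_mul_of_integrable_sq (by fun_prop) (by fun_prop) hv hG₀
  have hdvG : Integrable (fun q => dx v q.1 q.2 * ((1 + |q.2|) * G q.1 q.2)) (slab a b) :=
    integrable_mul_of_integrable_sq (by fun_prop) (by fun_prop) hdv (by simpa only [mul_pow])
  have hJ : Integrable (fun q => (1 + |q.2|) ^ (1 - 1)
      * ((3 : ℝ) • dx v ^ 2 + (2 : ℝ) • (v * G)) q.1 q.2) (slab a b) := by
    simpa using! (hdv.const_mul 3).add (hvG.const_mul 2)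
  have hS : Integrable (fun q => (1 + |q.2|) ^ 1 * ((-2 : ℝ) • (dx v * G)) q.1 q.2) (slab a b) := by
    refine (hdvG.const_mul (-2)).congr (.of_forall fun q => ?_)
    simp only [Pi.smul_apply, Pi.mul_apply, smul_eq_mul]
    ring
  have hmoment := h.sq.integral_pow_mul_sub hab one_le_two ha hb hv hJ hS
  simp only [pow_one, Nat.sub_self, pow_zero, one_mul, Nat.cast_one, Pi.add_apply, Pi.smul_apply,
    Pi.mul_apply, Pi.pow_apply, smul_eq_mul] at hmoment
  rw [hmoment, integral_add (hdv.const_mul 3) (hvG.const_mul 2), integral_const_mul,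
    integral_const_mul, ← integral_const_mul 2 fun q : ℝ × ℝ => _ * (q.2 * _), neg_add,
    ← sub_eq_add_neg, sub_eq_add_neg (_ - _), ← integral_neg]
  congr 2 with q
  ring

lemma two_mul_integral_dx_sq_le :
    2 * ∫ q, dx v q.1 q.2 ^ 2 ∂slab a b
      ≤ (∫ x, (1 + |x|) ^ 1 * v a x ^ 2) + (∫ x, (1 + |x|) ^ 1 * v b x ^ 2)
        + (∫ q, v q.1 q.2 ^ 2 ∂slab a b)
        + 2 * ∫ q, (1 + |q.2|) ^ 2 * G q.1 q.2 ^ 2 ∂slab a b := by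
  have hcv : Continuous fun q : ℝ × ℝ => v q.1 q.2 := h.density.continuous
  have hcdv : Continuous fun q : ℝ × ℝ => dx v q.1 q.2 := h.density.dx.continuous
  have hcG : Continuous fun q : ℝ × ℝ => G q.1 q.2 := h.flux.continuous
  have hG₀ : Integrable (fun q => G q.1 q.2 ^ 2) (slab a b) := by
    simpa using integrable_one_add_abs_pow_mul_of_le (Nat.zero_le 2) measurable_snd hG
  have hxG_le : ∀ q : ℝ × ℝ, (q.2 * G q.1 q.2) ^ 2 ≤ (1 + |q.2|) ^ 2 * G q.1 q.2 ^ 2 := fun q => by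
    rw [mul_pow, ← sq_abs q.2]
    gcongr
    linarith
  have hxG : Integrable (fun q => (q.2 * G q.1 q.2) ^ 2) (slab a b) :=
    hG.mono' (by fun_prop) (.of_forall fun q => by
      rw [norm_of_nonneg (sq_nonneg _)]
      exact hxG_le q)
  have hG₀_le : ∫ q, G q.1 q.2 ^ 2 ∂slab a b ≤ ∫ q, (1 + |q.2|) ^ 2 * G q.1 q.2 ^ 2 ∂slab a b :=
    integral_mono hG₀ hG fun q =>
      le_mul_of_one_le_left (sq_nonneg _) (one_le_pow₀ (by linarith [abs_nonneg q.2]))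
  have hlhs : ‖∫ x, x * (v b x ^ 2 - v a x ^ 2)‖
      ≤ ∫ x, ((1 + |x|) ^ 1 * v a x ^ 2 + (1 + |x|) ^ 1 * v b x ^ 2) :=
    norm_integral_le_of_norm_le (ha.add hb) <| .of_forall fun x => by
      rw [pow_one, ← mul_add, norm_mul, norm_eq_abs, norm_eq_abs]
      gcongr
      · linarith
      · rw [abs_le]
        constructor <;> linarith [sq_nonneg (v a x), sq_nonneg (v b x)]
  rw [h.integral_mul_sq_sub hab ha hb hv hdv hG, integral_add ha hb, norm_eq_abs, abs_le] at hlhs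
  linarith [two_mul_integral_mul_ge hcv.aestronglyMeasurable hcG.aestronglyMeasurable hv hG₀,
    two_mul_integral_mul_ge hcdv.aestronglyMeasurable
      (Continuous.aestronglyMeasurable (by fun_prop)) hdv hxG,
    integral_mono hxG hG hxG_le]

end

end IsBalanceLaw

lemma integrable_slab_comp_add_const {a b : ℝ} {g : ℝ → ℝ → ℝ}
    (hg : Integrable (fun q => g q.1 q.2) (slab a b)) (h : ℝ) :
    Integrable (fun q => g q.1 (q.2 + h)) (slab a b) :=
  ((MeasurePreserving.id _).prod
    (measurePreserving_add_right volume h)).integrable_comp_of_integrable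
    hg

lemma SpaceSmooth.integrable_slab_diffQuot_sq {g : ℝ → ℝ → ℝ} (hg : SpaceSmooth g) {a b : ℝ}
    (hinteg : Integrable (fun q => g q.1 q.2 ^ 2) (slab a b)) (h : ℝ) :
    Integrable (fun q => diffQuot h g q.1 q.2 ^ 2) (slab a b) := by
  have hshift : Integrable (fun q => g q.1 (q.2 + h) ^ 2) (slab a b) :=
    integrable_slab_comp_add_const (g := fun t x => g t x ^ 2) hinteg h
  have hcont : Continuous fun q : ℝ × ℝ => diffQuot h g q.1 q.2 := (hg.diffQuot h).continuous
  refine (((hshift.add hinteg).const_mul 2).div_const (h ^ 2)).mono' (by fun_prop)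
    (.of_forall fun q => ?_)
  rw [norm_of_nonneg (sq_nonneg _), diffQuot, div_pow]
  gcongr
  simp only [Pi.add_apply]
  linarith [sq_nonneg (g q.1 (q.2 + h) + g q.1 q.2)]

lemma SpaceSmooth.tendsto_diffQuot {g : ℝ → ℝ → ℝ} (hg : SpaceSmooth g) (t x : ℝ) :
    Tendsto (fun n : ℕ => diffQuot (1 / (n + 1)) g t x) atTop (𝓝 (dx g t x)) := by
  have hslope := (hasDerivAt_iff_tendsto_slope_zero.1 (hg.hasDerivAt t x)).comp
    (tendsto_nhdsWithin_iff.2 ⟨tendsto_one_div_add_atTop_nhds_zero_nat,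
      .of_forall fun n => (Nat.one_div_pos_of_nat (α := ℝ) (n := n)).ne'⟩)
  refine hslope.congr fun n => ?_
  rw [diffQuot, div_eq_inv_mul]
  rfl

/- The estimate for the square of a solution is applied to its difference quotients, whose second
derivatives are not yet known to be integrable. -/
theorem IsBalanceLaw.integrable_dx_dx_sq {v G : ℝ → ℝ → ℝ} {a b : ℝ} (hlaw : IsBalanceLaw v G 0)
    (hab : a ≤ b) (ha : Integrable fun x => (1 + |x|) ^ 1 * dx v a x ^ 2)
    (hb : Integrable fun x => (1 + |x|) ^ 1 * dx v b x ^ 2)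
    (hdv : Integrable (fun q => dx v q.1 q.2 ^ 2) (slab a b))
    (hdG : Integrable (fun q => (1 + |q.2|) ^ 2 * dx G q.1 q.2 ^ 2) (slab a b)) :
    Integrable (fun q => dx (dx v) q.1 q.2 ^ 2) (slab a b) := by
  have hv := hlaw.density
  set h : ℕ → ℝ := fun n => 1 / (n + 1)
  have hh (n : ℕ) : 0 < h n := Nat.one_div_pos_of_nat
  have hh₁ (n : ℕ) : h n ≤ 1 := by
    simpa [h] using Nat.one_div_le_one_div (α := ℝ) n.zero_le
  have hdv_h (n : ℕ) := hv.dx.integrable_slab_diffQuot_sq hdv (h n)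
  refine (integrable_of_tendsto_of_integral_le (C := ((∫ x, 2 ^ 1 * ((1 + |x|) ^ 1 * dx v a x ^ 2))
    + (∫ x, 2 ^ 1 * ((1 + |x|) ^ 1 * dx v b x ^ 2))
    + (∫ q, 2 ^ 0 * ((1 + |q.2|) ^ 0 * dx v q.1 q.2 ^ 2) ∂slab a b)
    + 2 * ∫ q, 2 ^ 2 * ((1 + |q.2|) ^ 2 * dx G q.1 q.2 ^ 2) ∂slab a b) / 2) hdv_h
    (fun n q => sq_nonneg _) (fun n => ?_) fun q => (hv.dx.tendsto_diffQuot q.1 q.2).pow 2).1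
  obtain ⟨ha_h, ha_le⟩ := hv.integral_weight_mul_sq_diffQuot_le (hh n) (hh₁ n) ha
  obtain ⟨hb_h, hb_le⟩ := hv.integral_weight_mul_sq_diffQuot_le (hh n) (hh₁ n) hb
  obtain ⟨hv_h, hv_le⟩ := hv.integral_slab_weight_mul_sq_diffQuot_le (k := 0) (hh n) (hh₁ n)
    (by simpa only [pow_zero, one_mul] using hdv)
  obtain ⟨hG_h, hG_le⟩ :=
    hlaw.flux.integral_slab_weight_mul_sq_diffQuot_le (hh n) (hh₁ n) hdG
  have hest := (hlaw.diffQuot (h n)).two_mul_integral_dx_sq_le hab ha_h hb_h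
    (by simpa only [pow_zero, one_mul] using hv_h) (by rw [dx_diffQuot hv]; exact hdv_h n) hG_h
  rw [dx_diffQuot hv] at hest
  simp only [pow_zero, one_mul] at hv_le
  rw [le_div_iff₀ two_pos]
  simp only [pow_zero, one_mul]
  linarith

/-! ### Conservation of mass and energy -/

lemma ae_slab_fst_mem (a b : ℝ) : ∀ᵐ q ∂slab a b, q.1 ∈ Icc a b :=
  Measure.quasiMeasurePreserving_fst.ae <|
    (ae_restrict_mem measurableSet_Ioc).mono fun _ ht => Ioc_subset_Icc_self ht

/-- The conserved mass `∫ u²`. -/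
noncomputable def mass (u : ℝ → ℝ → ℝ) (t : ℝ) : ℝ := ∫ x, u t x ^ 2

/-- The conserved energy `∫ (½ uₓ² + |u| ^ (p + 1) / (p + 1))`. -/
noncomputable def energy (p : ℝ) (u : ℝ → ℝ → ℝ) (t : ℝ) : ℝ := ∫ x, energyDensity p u t x

lemma mass_nonneg (u : ℝ → ℝ → ℝ) (t : ℝ) : 0 ≤ mass u t :=
  integral_nonneg fun _ => sq_nonneg _

section

variable {p : ℝ} (hp : 1 < p) (u : ℝ → ℝ → ℝ) (t x : ℝ)
include hp

lemma dx_sq_le_energyDensity : dx u t x ^ 2 ≤ 2 * energyDensity p u t x := by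
  have hb : 0 ≤ 1 / (p + 1) * (u * nonlinearity p u) t x :=
    mul_nonneg (by positivity) (mul_nonlinearity_nonneg p u t x)
  simp only [energyDensity, Pi.add_apply, Pi.smul_apply, Pi.pow_apply, smul_eq_mul]
  linarith

lemma massFlux_le_energyDensity : massFlux p u t x ≤ (6 + 2 * p) * energyDensity p u t x := by
  have hb : 0 ≤ 1 / (p + 1) * (u * nonlinearity p u) t x :=
    mul_nonneg (by positivity) (mul_nonlinearity_nonneg p u t x)
  simp only [massFlux, energyDensity, Pi.add_apply, Pi.smul_apply, Pi.pow_apply, smul_eq_mul]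
  rw [← mul_one_div (2 * p)]
  nlinarith [sq_nonneg (dx u t x)]

lemma energyDensity_le_massFlux : energyDensity p u t x ≤ massFlux p u t x := by
  have hb := mul_nonlinearity_nonneg p u t x
  simp only [massFlux, energyDensity, Pi.add_apply, Pi.smul_apply, Pi.pow_apply, smul_eq_mul]
  gcongr <;> linarith

lemma massFlux_nonneg : 0 ≤ massFlux p u t x :=
  (energyDensity_nonneg hp u t x).trans (energyDensity_le_massFlux hp u t x)

end

namespace IsGKdVSolution

variable {p : ℝ} {u : ℝ → ℝ → ℝ} (hu : IsGKdVSolution p u) (hp : 1 < p)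
include hu hp

lemma sq_le_mass_add_energy (t x : ℝ) : u t x ^ 2 ≤ mass u t + 2 * energy p u t := by
  have hsq : Integrable fun x => u t x ^ 2 := by simpa using hu.integrable_sq 0 t
  have hdx : Integrable fun x => dx u t x ^ 2 := by simpa using hu.integrable_dx_sq 0 t
  have he : Integrable (energyDensity p u t) := by simpa using! hu.integrable_energyDensity hp 0 t
  have hle : ∫ x, dx u t x ^ 2 ≤ 2 * energy p u t := by
    rw [energy, ← integral_const_mul]
    exact integral_mono hdx (he.const_mul 2) fun x => dx_sq_le_energyDensity hp u t x
  refine (sq_le_integral_sq_add_integral_deriv_sq (hu.spaceSmooth.hasDerivAt t)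
    (hu.spaceSmooth.dx.continuous_slice t) hsq hdx x).trans ?_
  rw [mass]
  gcongr

lemma integral_mass_add_energy (t : ℝ) :
    ∫ x, (u t x ^ 2 + energyDensity p u t x) = mass u t + energy p u t :=
  integral_add (by simpa using hu.integrable_sq 0 t)
    (by simpa using! hu.integrable_energyDensity hp 0 t)

lemma dx_mul_dx_nonlinearity_nonneg (t x : ℝ) : 0 ≤ dx u t x * dx (nonlinearity p u) t x := by
  rw [hu.dx_nonlinearity hp, mul_left_comm]
  exact mul_nonneg (by positivity) (mul_self_nonneg _)

lemma exists_abs_rpow_le {I : Set ℝ} {C : ℝ} (hC : ∀ t ∈ I, mass u t + energy p u t ≤ C) :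
    ∃ Λ, 0 ≤ Λ ∧ ∀ t ∈ I, ∀ x, |u t x| ^ (p - 1) ≤ Λ := by
  refine ⟨√(2 * C) ^ (p - 1), by positivity, fun t ht x => ?_⟩
  refine rpow_le_rpow (abs_nonneg _) (abs_le_sqrt ?_) (by linarith)
  linarith [hu.sq_le_mass_add_energy hp t x, hC t ht, mass_nonneg u t]

section

variable {a b C : ℝ} (hC : ∀ t ∈ Icc a b, mass u t + energy p u t ≤ C)
include hC

lemma integrable_slab_sq_add_energyDensity :
    Integrable (fun q => u q.1 q.2 ^ 2 + energyDensity p u q.1 q.2) (slab a b) := by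
  refine integrable_slab_of_integral_le (g := fun t x => u t x ^ 2 + energyDensity p u t x)
    ?_ (fun t x => add_nonneg (sq_nonneg _) (energyDensity_nonneg hp u t x)) (fun t => ?_)
    fun t ht => (hu.integral_mass_add_energy hp t).trans_le (hC t ht)
  · have hcu := hu.spaceSmooth.continuous
    have hce := (hu.isBalanceLaw_energy hp).density.continuous
    exact (hcu.pow 2).add hce
  · simpa using! (hu.integrable_sq 0 t).add (hu.integrable_energyDensity hp 0 t)

lemma integrable_slab_sq : Integrable (fun q => u q.1 q.2 ^ 2) (slab a b) :=
  (hu.integrable_slab_sq_add_energyDensity hp hC).mono'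
    (hu.spaceSmooth.continuous.pow 2).aestronglyMeasurable <| .of_forall fun q => by
      rw [norm_of_nonneg (sq_nonneg _)]
      linarith [energyDensity_nonneg hp u q.1 q.2]

lemma integrable_slab_energyDensity : Integrable ↿(energyDensity p u) (slab a b) := by
  refine ((hu.integrable_slab_sq_add_energyDensity hp hC).sub (hu.integrable_slab_sq hp hC)).congr
    (.of_forall fun q => ?_)
  exact add_sub_cancel_left _ _

lemma integrable_slab_massFlux : Integrable ↿(massFlux p u) (slab a b) :=
  ((hu.integrable_slab_energyDensity hp hC).const_mul (6 + 2 * p)).mono'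
    (hu.isBalanceLaw_mass hp).flux.continuous.aestronglyMeasurable <| .of_forall fun q => by
      exact (norm_of_nonneg (massFlux_nonneg hp u q.1 q.2)).trans_le <|
        massFlux_le_energyDensity hp u q.1 q.2

lemma integrable_slab_nonlinearity_sq :
    Integrable (fun q => nonlinearity p u q.1 q.2 ^ 2) (slab a b) := by
  have hcF : Continuous fun q : ℝ × ℝ => nonlinearity p u q.1 q.2 :=
    (hu.spaceSmooth_nonlinearity hp).continuous
  obtain ⟨Λ, hΛ₀, hΛ⟩ := hu.exists_abs_rpow_le hp hC
  refine ((hu.integrable_slab_sq hp hC).const_mul (Λ ^ 2)).mono' (by fun_prop) ?_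
  filter_upwards [ae_slab_fst_mem a b] with q hq
  rw [norm_of_nonneg (sq_nonneg _), nonlinearity, mul_pow]
  gcongr
  exact hΛ q.1 hq q.2

variable (hab : a ≤ b)
include hab

lemma integrable_slab_sq_mul_massFlux :
    Integrable (fun q => (1 + |q.2|) ^ 2 * massFlux p u q.1 q.2) (slab a b) :=
  (hu.isBalanceLaw_mass hp).integrable_sq_mul_flux hab (hu.integrable_sq 3 a)
    (hu.integrable_sq 3 b) (hu.integrable_slab_sq hp hC) (hu.integrable_slab_massFlux hp hC)
    (massFlux_nonneg hp u)

lemma integrable_slab_sq_mul_energyDensity :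
    Integrable (fun q => (1 + |q.2|) ^ 2 * energyDensity p u q.1 q.2) (slab a b) := by
  have hce : Continuous fun q : ℝ × ℝ => energyDensity p u q.1 q.2 :=
    (hu.isBalanceLaw_energy hp).density.continuous
  refine (hu.integrable_slab_sq_mul_massFlux hp hC hab).mono' (by fun_prop) (.of_forall fun q => ?_)
  rw [norm_of_nonneg (mul_nonneg (sq_nonneg _) (energyDensity_nonneg hp u q.1 q.2))]
  gcongr
  exact energyDensity_le_massFlux hp u q.1 q.2

lemma integrable_slab_sq_mul_dx_sq :
    Integrable (fun q => (1 + |q.2|) ^ 2 * dx u q.1 q.2 ^ 2) (slab a b) := by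
  have hcdx : Continuous fun q : ℝ × ℝ => dx u q.1 q.2 := hu.spaceSmooth.dx.continuous
  refine ((hu.integrable_slab_sq_mul_energyDensity hp hC hab).const_mul 2).mono' (by fun_prop)
    (.of_forall fun q => ?_)
  rw [norm_of_nonneg (by positivity), mul_left_comm]
  gcongr
  exact dx_sq_le_energyDensity hp u q.1 q.2

lemma integrable_slab_sq_mul_dx_nonlinearity_sq :
    Integrable (fun q => (1 + |q.2|) ^ 2 * dx (nonlinearity p u) q.1 q.2 ^ 2) (slab a b) := by
  have hcdF : Continuous fun q : ℝ × ℝ => dx (nonlinearity p u) q.1 q.2 :=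
    (hu.spaceSmooth_nonlinearity hp).dx.continuous
  obtain ⟨Λ, hΛ₀, hΛ⟩ := hu.exists_abs_rpow_le hp hC
  refine ((hu.integrable_slab_sq_mul_dx_sq hp hC hab).const_mul
    ((p * Λ) ^ 2)).mono' (by fun_prop) ?_
  filter_upwards [ae_slab_fst_mem a b] with q hq
  rw [norm_of_nonneg (by positivity), hu.dx_nonlinearity hp, mul_pow, mul_left_comm]
  gcongr
  exact hΛ q.1 hq q.2

lemma integrable_slab_dx_dx_sq : Integrable (fun q => dx (dx u) q.1 q.2 ^ 2) (slab a b) := by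
  refine (hu.isBalanceLaw hp).integrable_dx_dx_sq hab (hu.integrable_dx_sq 1 a)
    (hu.integrable_dx_sq 1 b) ?_ (hu.integrable_slab_sq_mul_dx_nonlinearity_sq hp hC hab)
  simpa using integrable_one_add_abs_pow_mul_of_le (Nat.zero_le 2) measurable_snd
    (hu.integrable_slab_sq_mul_dx_sq hp hC hab)

lemma integrable_slab_energyFlux : Integrable ↿(energyFlux p u) (slab a b) := by
  have hdu := integrable_one_add_abs_pow_mul_of_le (Nat.zero_le 2) measurable_snd
    (hu.integrable_slab_sq_mul_dx_sq hp hC hab)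
  have hdF := integrable_one_add_abs_pow_mul_of_le (Nat.zero_le 2) measurable_snd
    (hu.integrable_slab_sq_mul_dx_nonlinearity_sq hp hC hab)
  simp only [pow_zero, one_mul] at hdu hdF
  exact (((hu.integrable_slab_dx_dx_sq hp hC hab).const_mul _).add
    ((integrable_mul_of_integrable_sq hu.spaceSmooth.dx.continuous.aestronglyMeasurable
      (hu.spaceSmooth_nonlinearity hp).dx.continuous.aestronglyMeasurable hdu hdF).const_mul _)).add
    ((hu.integrable_slab_nonlinearity_sq hp hC).const_mul _)

end

end IsGKdVSolution

lemma eq_of_mem_uIcc_of_abs_sub_le {s w r : ℝ} (hw : w ∈ uIcc s r) (hle : |r - s| ≤ |r - w|) :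
    w = s := by
  rcases mem_uIcc.1 hw with ⟨hsw, hwr⟩ | ⟨hrw, hws⟩
  · rw [abs_of_nonneg (by linarith), abs_of_nonneg (by linarith)] at hle
    linarith
  · rw [abs_of_nonpos (by linarith), abs_of_nonpos (by linarith)] at hle
    linarith

lemma isCompact_bddAbove_image {f : ℝ → ℝ} {K : Set ℝ} (hK : IsCompact K)
    (hf : ∀ t ∈ K, IsBoundedUnder (· ≤ ·) (𝓝 t) f) : BddAbove (f '' K) := by
  refine hK.induction_on (by simp) (fun _ _ hst ht => ht.mono (image_mono hst))
    (fun _ _ hs ht => by simpa only [image_union] using hs.union ht) fun t ht => ?_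
  obtain ⟨C, hC⟩ := hf t ht
  exact ⟨_, mem_nhdsWithin_of_mem_nhds (eventually_map.1 hC), C, by rintro _ ⟨s, hs, rfl⟩; exact hs⟩

lemma eq_of_forall_uIcc_isBoundedUnder {f : ℝ → ℝ}
    (hf : ∀ a b, BddAbove (f '' uIcc a b) → f a = f b) {s t : ℝ}
    (hst : ∀ r ∈ uIcc s t, r ≠ s → IsBoundedUnder (· ≤ ·) (𝓝 r) f) : f s = f t := by
  have heq : ∀ r ∈ uIcc s t, r ≠ s → f r = f t := fun r hr hrs => by
    refine hf r t (isCompact_bddAbove_image isCompact_uIcc fun w hw => ?_)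
    refine hst w (uIcc_subset_uIcc_right hr hw) fun hws => hrs ?_
    exact eq_of_mem_uIcc_of_mem_uIcc hr (hws ▸ hw)
  refine hf s t ⟨max (f s) (f t), ?_⟩
  rintro _ ⟨r, hr, rfl⟩
  rcases eq_or_ne r s with rfl | hrs
  · exact le_max_left _ _
  · exact (heq r hr hrs).trans_le (le_max_right _ _)

/- Baire's theorem on the closed set `E` of points near which `f` is unbounded yields an interval
meeting `E` on which `f ≤ n` at the points of `E`. Any other point of the interval is joined to a
nearest point of `E` by a segment on which `f` is bounded, so `f ≤ n` on the whole interval. -/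
theorem isBoundedUnder_of_lowerSemicontinuous {f : ℝ → ℝ} (hlsc : LowerSemicontinuous f)
    (hf : ∀ a b, BddAbove (f '' uIcc a b) → f a = f b) (t : ℝ) :
    IsBoundedUnder (· ≤ ·) (𝓝 t) f := by
  set E := {t | ¬IsBoundedUnder (· ≤ ·) (𝓝 t) f}
  by_contra ht
  have hclosed : IsClosed E := by
    refine isOpen_compl_iff.1 (isOpen_iff_mem_nhds.2 fun s hs => ?_)
    obtain ⟨C, hC⟩ := not_not.1 hs
    filter_upwards [eventually_eventually_nhds.2 (eventually_map.1 hC)] with r hr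
    exact not_not.2 ⟨C, hr⟩
  have : CompleteSpace E := hclosed.completeSpace_coe
  have : Nonempty E := ⟨t, ht⟩
  obtain ⟨n, c, hc⟩ := nonempty_interior_of_iUnion_of_closed
    (f := fun n : ℕ => {s : E | f s ≤ n})
    (fun n => (hlsc.isClosed_preimage n).preimage continuous_subtype_val)
    (iUnion_eq_univ_iff.2 fun s => exists_nat_ge (f s))
  obtain ⟨ε, hε, hball⟩ := Metric.mem_nhds_iff.1 (mem_interior_iff_mem_nhds.1 hc)
  refine c.2 ⟨n, eventually_map.2 ?_⟩
  filter_upwards [Metric.ball_mem_nhds (c : ℝ) hε] with r hr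
  have hsub : uIcc (c : ℝ) r ⊆ Metric.ball c ε :=
    (convex_ball (c : ℝ) ε).ordConnected.uIcc_subset (Metric.mem_ball_self hε) hr
  obtain ⟨s, ⟨hsE, hsr⟩, hmin⟩ := (isCompact_uIcc.inter_left hclosed).exists_isMinOn
    ⟨_, c.2, left_mem_uIcc⟩ (f := fun s => dist s r) (by fun_prop)
  suffices f s = f r from this ▸ hball (show (⟨s, hsE⟩ : E) ∈ Metric.ball c ε from hsub hsr)
  refine eq_of_forall_uIcc_isBoundedUnder hf fun w hw hws => ?_
  by_contra hwE
  refine hws ?_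
  have hle : dist s r ≤ dist w r := hmin ⟨hwE, uIcc_subset_uIcc_right hsr hw⟩
  rw [dist_comm w, dist_comm s, dist_eq, dist_eq] at hle
  exact eq_of_mem_uIcc_of_abs_sub_le hw hle

theorem eq_of_lowerSemicontinuous {f : ℝ → ℝ} (hlsc : LowerSemicontinuous f)
    (hf : ∀ a b, BddAbove (f '' uIcc a b) → f a = f b) (s t : ℝ) : f s = f t :=
  hf s t <| isCompact_bddAbove_image isCompact_uIcc fun r _ =>
    isBoundedUnder_of_lowerSemicontinuous hlsc hf r

lemma lowerSemicontinuous_integral {g : ℝ → ℝ → ℝ} (hg : Continuous ↿g) (hg₀ : ∀ t x, 0 ≤ g t x)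
    (hinteg : ∀ t, Integrable (g t)) : LowerSemicontinuous fun t => ∫ x, g t x := by
  refine lowerSemicontinuous_iff_isClosed_preimage.2 fun C => IsSeqClosed.isClosed ?_
  intro s t hs hst
  refine (integrable_of_tendsto_of_integral_le (fun n => hinteg (s n)) (fun n => hg₀ (s n)) hs
    fun x => ?_).2
  exact (hg.tendsto (t, x)).comp (hst.prodMk_nhds tendsto_const_nhds)

lemma integrable_pow_mul {α : Type*} [MeasurableSpace α] {μ : Measure α} {k : ℕ} {X g : α → ℝ}
    (hX : Measurable X) (hg : Integrable (fun a => (1 + |X a|) ^ k * g a) μ) :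
    Integrable (fun a => X a ^ k * g a) μ :=
  integrable_comp_mul_of_abs_le (w := (· ^ k)) (A := 1) (continuous_pow k) (fun x => by
    rw [abs_pow, one_mul]
    gcongr
    linarith) hX hg

/-- The `k`-th spatial moment of a density `g` at time `t`. -/
noncomputable def moment (k : ℕ) (g : ℝ → ℝ → ℝ) (t : ℝ) : ℝ := ∫ x, x ^ k * g t x

lemma moment_zero (g : ℝ → ℝ → ℝ) (t : ℝ) : moment 0 g t = ∫ x, g t x := by
  simp only [moment, pow_zero, one_mul]

theorem IsBalanceLaw.moment_sub {Q J : ℝ → ℝ → ℝ} {a b : ℝ} {k : ℕ} (h : IsBalanceLaw Q J 0)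
    (hab : a ≤ b) (hk : k ≤ 2) (ha : Integrable fun x => (1 + |x|) ^ k * Q a x)
    (hb : Integrable fun x => (1 + |x|) ^ k * Q b x) (hQ : Integrable ↿Q (slab a b))
    (hJ : Integrable (fun q => (1 + |q.2|) ^ (k - 1) * J q.1 q.2) (slab a b)) :
    moment k Q b - moment k Q a = -(k * ∫ t in a..b, moment (k - 1) J t) := by
  unfold moment
  rw [← integral_sub (integrable_pow_mul (X := fun x => x) measurable_id hb)
      (integrable_pow_mul (X := fun x => x) measurable_id ha),
    ← integral_slab_eq_intervalIntegral (g := fun t x => x ^ (k - 1) * J t x) hab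
      (integrable_pow_mul measurable_snd hJ)]
  simpa [mul_sub] using h.integral_pow_mul_sub hab hk ha hb hQ hJ (by simp)

namespace IsGKdVSolution

variable {p : ℝ} {u : ℝ → ℝ → ℝ} (hu : IsGKdVSolution p u) (hp : 1 < p)
include hu hp

lemma lowerSemicontinuous_mass_add_energy :
    LowerSemicontinuous fun t => mass u t + energy p u t := by
  simp only [← hu.integral_mass_add_energy hp]
  refine lowerSemicontinuous_integral (g := fun t x => u t x ^ 2 + energyDensity p u t x) ?_
    (fun t x => add_nonneg (sq_nonneg _) (energyDensity_nonneg hp u t x)) fun t => ?_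
  · exact (hu.spaceSmooth.continuous.pow 2).add (hu.isBalanceLaw_energy hp).density.continuous
  · simpa using! (hu.integrable_sq 0 t).add (hu.integrable_energyDensity hp 0 t)

section

variable {a b C : ℝ} (hab : a ≤ b) (hC : ∀ t ∈ Icc a b, mass u t + energy p u t ≤ C)
include hab hC

lemma mass_eq_of_le : mass u b = mass u a := by
  have h := (hu.isBalanceLaw_mass hp).moment_sub hab (Nat.zero_le 2) (hu.integrable_sq 0 a)
    (hu.integrable_sq 0 b) (hu.integrable_slab_sq hp hC)
    (by simpa using! hu.integrable_slab_massFlux hp hC)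
  simpa [moment_zero, sub_eq_zero] using! h

lemma energy_eq_of_le : energy p u b = energy p u a := by
  have h := (hu.isBalanceLaw_energy hp).moment_sub hab (Nat.zero_le 2)
    (hu.integrable_energyDensity hp 0 a) (hu.integrable_energyDensity hp 0 b)
    (hu.integrable_slab_energyDensity hp hC)
    (by simpa using! hu.integrable_slab_energyFlux hp hC hab)
  simpa [moment_zero, sub_eq_zero] using! h

end

lemma mass_add_energy_eq (s t : ℝ) : mass u s + energy p u s = mass u t + energy p u t := by
  refine eq_of_lowerSemicontinuous (hu.lowerSemicontinuous_mass_add_energy hp)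
    (fun a b hbdd => ?_) s t
  obtain ⟨C, hC⟩ := hbdd
  have hle : ∀ t ∈ uIcc a b, mass u t + energy p u t ≤ C := fun t ht => hC ⟨t, ht, rfl⟩
  rcases le_total a b with hab | hba
  · rw [uIcc_of_le hab] at hle
    rw [hu.mass_eq_of_le hp hab hle, hu.energy_eq_of_le hp hab hle]
  · rw [uIcc_of_ge hba] at hle
    rw [hu.mass_eq_of_le hp hba hle, hu.energy_eq_of_le hp hba hle]

lemma mass_add_energy_le (t : ℝ) : mass u t + energy p u t ≤ mass u 0 + energy p u 0 :=
  (hu.mass_add_energy_eq hp t 0).le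

lemma exists_forall_abs_rpow_le : ∃ Λ, 0 ≤ Λ ∧ ∀ t x, |u t x| ^ (p - 1) ≤ Λ := by
  simpa using hu.exists_abs_rpow_le hp (I := univ) fun t _ => hu.mass_add_energy_le hp t

theorem mass_eq (t : ℝ) : mass u t = mass u 0 := by
  rcases le_total 0 t with ht | ht
  · exact hu.mass_eq_of_le hp ht fun s _ => hu.mass_add_energy_le hp s
  · exact (hu.mass_eq_of_le hp ht fun s _ => hu.mass_add_energy_le hp s).symm

theorem energy_eq (t : ℝ) : energy p u t = energy p u 0 := by
  linarith [hu.mass_add_energy_eq hp t 0, hu.mass_eq hp t]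

end IsGKdVSolution

/-! ### The dispersion inequality -/

lemma sq_integral_mul_le {α : Type*} [MeasurableSpace α] {μ : Measure α} {f g : α → ℝ}
    (hf : AEStronglyMeasurable f μ) (hg : AEStronglyMeasurable g μ)
    (hf₂ : Integrable (fun a => f a ^ 2) μ) (hg₂ : Integrable (fun a => g a ^ 2) μ) :
    (∫ a, f a * g a ∂μ) ^ 2 ≤ (∫ a, f a ^ 2 ∂μ) * ∫ a, g a ^ 2 ∂μ := by
  have hfg := integrable_mul_of_integrable_sq hf hg hf₂ hg₂
  have hquad : ∀ c : ℝ, 0 ≤ (∫ a, f a ^ 2 ∂μ) * (c * c) + 2 * (∫ a, f a * g a ∂μ) * c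
      + ∫ a, g a ^ 2 ∂μ := fun c => by
    have hsum : Integrable (fun a => f a ^ 2 * (c * c) + 2 * (f a * g a) * c) μ :=
      (hf₂.mul_const _).add ((hfg.const_mul 2).mul_const c)
    rw [← integral_mul_const, ← integral_const_mul, ← integral_mul_const,
      ← integral_add (hf₂.mul_const _) ((hfg.const_mul 2).mul_const c), ← integral_add hsum hg₂]
    refine integral_nonneg fun a => (sq_nonneg (c * f a + g a)).trans_eq ?_
    ring
  have := discrim_le_zero hquad
  rw [discrim] at this
  linarith

namespace IsGKdVSolution

variable {p : ℝ} {u : ℝ → ℝ → ℝ} (hu : IsGKdVSolution p u)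
include hu

lemma integrable_dx_dx_sq (t : ℝ) : Integrable fun x => dx (dx u) t x ^ 2 := by
  obtain ⟨f, hf⟩ := exists_schwartz_dx (hu.schwartz_dx t)
  simpa [hf] using integrable_one_add_abs_pow_mul_sq f 0

lemma integral_mul_dx_dx (t : ℝ) : ∫ x, u t x * dx (dx u) t x = -∫ x, dx u t x ^ 2 := by
  have hsm := hu.spaceSmooth
  have hu₂ : Integrable fun x => u t x ^ 2 := by simpa using hu.integrable_sq 0 t
  have hdu₂ : Integrable fun x => dx u t x ^ 2 := by simpa using hu.integrable_dx_sq 0 t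
  have hcu := (hsm.continuous_slice t).aestronglyMeasurable (μ := volume)
  have hcdu := (hsm.dx.continuous_slice t).aestronglyMeasurable (μ := volume)
  have hcddu := (hsm.dx.dx.continuous_slice t).aestronglyMeasurable (μ := volume)
  simp only [sq (dx u t _)]
  exact integral_mul_deriv_eq_deriv_mul_of_integrable (fun x _ => hsm.hasDerivAt t x)
    (fun x _ => hsm.dx.hasDerivAt t x)
    (integrable_mul_of_integrable_sq hcu hcddu hu₂ (hu.integrable_dx_dx_sq t))
    (by simpa only [← sq] using! hdu₂) (integrable_mul_of_integrable_sq hcu hcdu hu₂ hdu₂)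

variable (hp : 1 < p)
include hp

lemma integrable_massFlux (k : ℕ) (t : ℝ) :
    Integrable fun x => (1 + |x|) ^ k * massFlux p u t x := by
  refine (((hu.integrable_dx_sq k t).const_mul 3).add
    ((hu.integrable_mul_nonlinearity hp k t).const_mul (2 * p / (p + 1)))).congr
    (.of_forall fun x => ?_)
  simp only [massFlux, Pi.add_apply, Pi.smul_apply, Pi.pow_apply, smul_eq_mul]
  ring

lemma integrable_nonlinearity_sq (t : ℝ) : Integrable fun x => nonlinearity p u t x ^ 2 := by
  obtain ⟨Λ, -, hΛ⟩ := hu.exists_forall_abs_rpow_le hp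
  have hcont := (hu.spaceSmooth_nonlinearity hp).continuous_slice t
  refine ((hu.integrable_sq 0 t).const_mul (Λ ^ 2)).mono' (by fun_prop) (.of_forall fun x => ?_)
  rw [norm_of_nonneg (sq_nonneg _), nonlinearity, mul_pow, pow_zero, one_mul]
  gcongr
  exact hΛ t x

lemma integrable_dx_nonlinearity_sq (t : ℝ) :
    Integrable fun x => dx (nonlinearity p u) t x ^ 2 := by
  obtain ⟨Λ, hΛ₀, hΛ⟩ := hu.exists_forall_abs_rpow_le hp
  have hcont := (hu.spaceSmooth_nonlinearity hp).dx.continuous_slice t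
  refine ((hu.integrable_dx_sq 0 t).const_mul ((p * Λ) ^ 2)).mono' (by fun_prop)
    (.of_forall fun x => ?_)
  rw [norm_of_nonneg (sq_nonneg _), hu.dx_nonlinearity hp, mul_pow, pow_zero, one_mul]
  gcongr
  exact hΛ t x

lemma integral_nonlinearity_mul_dx_dx (t : ℝ) :
    ∫ x, nonlinearity p u t x * dx (dx u) t x = -∫ x, dx u t x * dx (nonlinearity p u) t x := by
  have hsm := hu.spaceSmooth
  have hsF := hu.spaceSmooth_nonlinearity hp
  have hdu₂ : Integrable fun x => dx u t x ^ 2 := by simpa using hu.integrable_dx_sq 0 t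
  have hcdu := (hsm.dx.continuous_slice t).aestronglyMeasurable (μ := volume)
  have hcddu := (hsm.dx.dx.continuous_slice t).aestronglyMeasurable (μ := volume)
  have hcF := (hsF.continuous_slice t).aestronglyMeasurable (μ := volume)
  have hcdF := (hsF.dx.continuous_slice t).aestronglyMeasurable (μ := volume)
  have hF₂ := hu.integrable_nonlinearity_sq hp t
  simp only [mul_comm (dx u t _)]
  exact integral_mul_deriv_eq_deriv_mul_of_integrable (fun x _ => hsF.hasDerivAt t x)
    (fun x _ => hsm.dx.hasDerivAt t x)
    (integrable_mul_of_integrable_sq hcF hcddu hF₂ (hu.integrable_dx_dx_sq t))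
    (integrable_mul_of_integrable_sq hcdF hcdu (hu.integrable_dx_nonlinearity_sq hp t) hdu₂)
    (integrable_mul_of_integrable_sq hcF hcdu hF₂ hdu₂)

lemma integrable_dx_mul_dx_nonlinearity (t : ℝ) :
    Integrable fun x => dx u t x * dx (nonlinearity p u) t x :=
  integrable_mul_of_integrable_sq (hu.spaceSmooth.dx.continuous_slice t).aestronglyMeasurable
    ((hu.spaceSmooth_nonlinearity hp).dx.continuous_slice t).aestronglyMeasurable
    (by simpa using hu.integrable_dx_sq 0 t) (hu.integrable_dx_nonlinearity_sq hp t)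

lemma energy_eq_add (t : ℝ) :
    energy p u t
      = 1 / 2 * (∫ x, dx u t x ^ 2) + 1 / (p + 1) * moment 0 (u * nonlinearity p u) t := by
  have hdu₂ : Integrable fun x => dx u t x ^ 2 := by simpa using hu.integrable_dx_sq 0 t
  have hpot : Integrable fun x => (u * nonlinearity p u) t x := by
    simpa using hu.integrable_mul_nonlinearity hp 0 t
  rw [moment_zero, ← integral_const_mul, ← integral_const_mul,
    ← integral_add (hdu₂.const_mul _) (hpot.const_mul _)]
  rfl

lemma moment_zero_massFlux (t : ℝ) : moment 0 (massFlux p u) t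
    = 3 * (∫ x, dx u t x ^ 2) + 2 * p / (p + 1) * moment 0 (u * nonlinearity p u) t := by
  have hdu₂ : Integrable fun x => dx u t x ^ 2 := by simpa using hu.integrable_dx_sq 0 t
  have hpot : Integrable fun x => (u * nonlinearity p u) t x := by
    simpa using hu.integrable_mul_nonlinearity hp 0 t
  rw [moment_zero, moment_zero, ← integral_const_mul, ← integral_const_mul,
    ← integral_add (hdu₂.const_mul _) (hpot.const_mul _)]
  rfl

lemma moment_zero_energyFlux (t : ℝ) : moment 0 (energyFlux p u) t
    = 3 / 2 * (∫ x, dx (dx u) t x ^ 2) + 2 * (∫ x, dx u t x * dx (nonlinearity p u) t x)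
      + 1 / 2 * ∫ x, nonlinearity p u t x ^ 2 := by
  have hddu := (hu.integrable_dx_dx_sq t).const_mul (3 / 2)
  have hdudF := (hu.integrable_dx_mul_dx_nonlinearity hp t).const_mul 2
  have hF := (hu.integrable_nonlinearity_sq hp t).const_mul (1 / 2)
  have hsum : Integrable fun x => 3 / 2 * dx (dx u) t x ^ 2
      + 2 * (dx u t x * dx (nonlinearity p u) t x) := hddu.add hdudF
  rw [moment_zero, ← integral_const_mul, ← integral_const_mul, ← integral_const_mul,
    ← integral_add hddu hdudF, ← integral_add hsum hF]
  rfl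

lemma sq_const_mul_add_moment_le (c t : ℝ) :
    (c * (∫ x, dx u t x ^ 2) + moment 0 (u * nonlinearity p u) t) ^ 2
      ≤ mass u t * (c ^ 2 * (∫ x, dx (dx u) t x ^ 2) + (∫ x, nonlinearity p u t x ^ 2)
        + 2 * c * ∫ x, dx u t x * dx (nonlinearity p u) t x) := by
  have hcu : Continuous fun x => u t x := hu.spaceSmooth.continuous_slice t
  have hcddu : Continuous fun x => dx (dx u) t x := hu.spaceSmooth.dx.dx.continuous_slice t
  have hcF : Continuous fun x => nonlinearity p u t x :=
    (hu.spaceSmooth_nonlinearity hp).continuous_slice t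
  have hu₂ : Integrable fun x => u t x ^ 2 := by simpa using hu.integrable_sq 0 t
  have hddu₂ := hu.integrable_dx_dx_sq t
  have hF₂ := hu.integrable_nonlinearity_sq hp t
  have hFddu := integrable_mul_of_integrable_sq hcF.aestronglyMeasurable
    hcddu.aestronglyMeasurable hF₂ hddu₂
  have huddu := integrable_mul_of_integrable_sq hcu.aestronglyMeasurable
    hcddu.aestronglyMeasurable hu₂ hddu₂
  have huF := integrable_mul_of_integrable_sq hcu.aestronglyMeasurable
    hcF.aestronglyMeasurable hu₂ hF₂
  have hexpand : ∀ x, (nonlinearity p u t x - c * dx (dx u) t x) ^ 2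
      = c ^ 2 * dx (dx u) t x ^ 2 + nonlinearity p u t x ^ 2
        - 2 * c * (nonlinearity p u t x * dx (dx u) t x) := fun x => by ring
  have hsum : Integrable fun x => c ^ 2 * dx (dx u) t x ^ 2 + nonlinearity p u t x ^ 2 :=
    (hddu₂.const_mul _).add hF₂
  have hcs := sq_integral_mul_le (g := fun x => nonlinearity p u t x - c * dx (dx u) t x)
    hcu.aestronglyMeasurable (by fun_prop) hu₂
    (by simpa only [hexpand] using! hsum.sub (hFddu.const_mul (2 * c)))
  simp only [hexpand, mul_sub, mul_left_comm _ c] at hcs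
  rw [integral_sub huF (huddu.const_mul c), integral_sub hsum (hFddu.const_mul _),
    integral_add (hddu₂.const_mul _) hF₂, integral_const_mul, integral_const_mul,
    integral_const_mul, hu.integral_mul_dx_dx, hu.integral_nonlinearity_mul_dx_dx hp] at hcs
  simpa [moment_zero, mass, add_comm, mul_neg] using hcs

/- With `A = ∫ uₓ²`, `B = ∫ |u| ^ (p + 1)` and `G = ∫ uₓ (|u| ^ (p - 1) u)ₓ`, the right-hand side
minus the left-hand side is half the defect in the Cauchy–Schwarz bound with `c = √3`, plus
`(√3 - (p + 3) / (p + 1)) A B + (2 - √3) M G`; the first coefficient is nonnegative exactly when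
`√3 ≤ p`. -/
theorem moment_potential_sq_le (hp₃ : √3 ≤ p) (t : ℝ) :
    (p - 1) ^ 2 / (2 * (p + 1) ^ 2) * moment 0 (u * nonlinearity p u) t ^ 2
      ≤ mass u t * moment 0 (energyFlux p u) t - energy p u t * moment 0 (massFlux p u) t := by
  have hcs := hu.sq_const_mul_add_moment_le hp √3 t
  rw [hu.energy_eq_add hp, hu.moment_zero_massFlux hp, hu.moment_zero_energyFlux hp]
  have hA : 0 ≤ ∫ x, dx u t x ^ 2 := integral_nonneg fun x => sq_nonneg _
  have hB : 0 ≤ moment 0 (u * nonlinearity p u) t := by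
    rw [moment_zero]
    exact integral_nonneg fun x => mul_nonlinearity_nonneg p u t x
  have hG : 0 ≤ ∫ x, dx u t x * dx (nonlinearity p u) t x :=
    integral_nonneg fun x => hu.dx_mul_dx_nonlinearity_nonneg hp t x
  have hM := mass_nonneg u t
  have h₃ : √3 ^ 2 = 3 := sq_sqrt (by norm_num)
  have hcoeff : 0 ≤ √3 - (p + 3) / (p + 1) := by
    have : 1 < √3 := (lt_sqrt zero_le_one).2 (by norm_num)
    rw [sub_nonneg, div_le_iff₀ (by linarith)]
    nlinarith [mul_nonneg (sub_nonneg.2 this.le) (sub_nonneg.2 hp₃)]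
  have hcoeff' : 0 ≤ 2 - √3 := sub_nonneg.2 (sqrt_le_iff.2 (by norm_num))
  generalize (∫ x, dx u t x ^ 2) = A at *
  generalize moment 0 (u * nonlinearity p u) t = B at *
  generalize (∫ x, dx u t x * dx (nonlinearity p u) t x) = G at *
  generalize (∫ x, dx (dx u) t x ^ 2) = V at *
  generalize (∫ x, nonlinearity p u t x ^ 2) = W at *
  generalize mass u t = M at *
  have hsplit : M * (3 / 2 * V + 2 * G + 1 / 2 * W)
      - (1 / 2 * A + 1 / (p + 1) * B) * (3 * A + 2 * p / (p + 1) * B)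
      = 1 / 2 * (M * (√3 ^ 2 * V + W + 2 * √3 * G) - (√3 * A + B) ^ 2)
        + (√3 - (p + 3) / (p + 1)) * (A * B) + (2 - √3) * (M * G)
        + (p - 1) ^ 2 / (2 * (p + 1) ^ 2) * B ^ 2 := by
    have : p + 1 ≠ 0 := by linarith
    field_simp
    linear_combination (A ^ 2 - M * V) * (p + 1) ^ 2 * h₃
  rw [hsplit]
  linarith [mul_nonneg hcoeff (mul_nonneg hA hB), mul_nonneg hcoeff' (mul_nonneg hM hG)]

end IsGKdVSolution

/-! ### Moments of a solution -/

lemma sq_le_indicator_add {m r η : ℝ} (hm : 0 ≤ m) (hr : 0 < r) (hη : 0 < η) (f : ℝ → ℝ)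
    (y x : ℝ) :
    f x ^ 2 ≤ (Icc (y - r) (y + r)).indicator (fun _ => η ^ 2) x
      + (r ^ 2)⁻¹ * ((x - y) ^ 2 * f x ^ 2) + (η ^ m)⁻¹ * (|f x| ^ m * f x ^ 2) := by
  have hfar : 0 ≤ (r ^ 2)⁻¹ * ((x - y) ^ 2 * f x ^ 2) := by positivity
  have hlarge : 0 ≤ (η ^ m)⁻¹ * (|f x| ^ m * f x ^ 2) := by positivity
  by_cases hx : x ∈ Icc (y - r) (y + r)
  · rw [indicator_of_mem hx]
    rcases le_total |f x| η with hle | hge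
    · linarith [sq_le_sq.2 (hle.trans_eq (abs_of_pos hη).symm)]
    · have : f x ^ 2 ≤ (η ^ m)⁻¹ * (|f x| ^ m * f x ^ 2) := by
        rw [le_inv_mul_iff₀ (by positivity)]
        gcongr
      linarith [sq_nonneg η]
  · have hdist : r ^ 2 ≤ (x - y) ^ 2 := by
      rw [← Real.closedBall_eq_Icc, Metric.mem_closedBall, not_le, dist_eq] at hx
      exact sq_le_sq.2 ((abs_of_pos hr).trans_le hx.le)
    have : f x ^ 2 ≤ (r ^ 2)⁻¹ * ((x - y) ^ 2 * f x ^ 2) := by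
      rw [le_inv_mul_iff₀ (by positivity)]
      gcongr
    rw [indicator_of_notMem hx]
    linarith

lemma integral_sq_le_of_concentration {m r η : ℝ} (hm : 0 ≤ m) (hr : 0 < r) (hη : 0 < η)
    {f : ℝ → ℝ} {y : ℝ} (hf : Integrable fun x => f x ^ 2)
    (hf₂ : Integrable fun x => (x - y) ^ 2 * f x ^ 2)
    (hfm : Integrable fun x => |f x| ^ m * f x ^ 2) :
    ∫ x, f x ^ 2 ≤ 2 * r * η ^ 2 + (r ^ 2)⁻¹ * (∫ x, (x - y) ^ 2 * f x ^ 2)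
      + (η ^ m)⁻¹ * ∫ x, |f x| ^ m * f x ^ 2 := by
  have hind : Integrable ((Icc (y - r) (y + r)).indicator fun _ => η ^ 2) :=
    (integrable_indicator_iff measurableSet_Icc).2 (integrableOn_const (by simp))
  have hsum : Integrable fun x => (Icc (y - r) (y + r)).indicator (fun _ => η ^ 2) x
      + (r ^ 2)⁻¹ * ((x - y) ^ 2 * f x ^ 2) := hind.add (hf₂.const_mul _)
  refine (integral_mono hf (hsum.add (hfm.const_mul (η ^ m)⁻¹))
    (sq_le_indicator_add hm hr hη f y)).trans_eq ?_
  simp only [Pi.add_apply]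
  rw [integral_add hsum (hfm.const_mul _), integral_add hind (hf₂.const_mul _),
    integral_const_mul, integral_const_mul, integral_indicator_const _ measurableSet_Icc,
    Real.volume_real_Icc_of_le (by linarith), smul_eq_mul]
  ring

lemma exists_forall_le_integral_abs_rpow_mul_sq {m M C : ℝ} (hm : 0 ≤ m) (hM : 0 < M)
    (hC : 0 ≤ C) :
    ∃ δ > 0, ∀ (f : ℝ → ℝ) (y : ℝ), Integrable (fun x => f x ^ 2) →
      Integrable (fun x => (x - y) ^ 2 * f x ^ 2) → Integrable (fun x => |f x| ^ m * f x ^ 2) →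
      M ≤ ∫ x, f x ^ 2 → ∫ x, (x - y) ^ 2 * f x ^ 2 ≤ C → δ ≤ ∫ x, |f x| ^ m * f x ^ 2 := by
  set r := √(4 * C / M + 1)
  set η := √(M / (8 * r))
  have hr : 0 < r := by positivity
  have hη : 0 < η := by positivity
  have hr₂ : r ^ 2 = 4 * C / M + 1 := sq_sqrt (by positivity)
  have hη₂ : η ^ 2 = M / (8 * r) := sq_sqrt (by positivity)
  refine ⟨η ^ m * (M / 2), by positivity, fun f y hf hf₂ hfm hMf hCf => ?_⟩
  have hbound := integral_sq_le_of_concentration hm hr hη hf hf₂ hfm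
  have hnear : 2 * r * η ^ 2 = M / 4 := by
    rw [hη₂]
    field_simp
    norm_num
  have hfar : (r ^ 2)⁻¹ * (∫ x, (x - y) ^ 2 * f x ^ 2) ≤ M / 4 := by
    rw [inv_mul_le_iff₀ (by positivity), hr₂]
    have : (4 * C / M + 1) * (M / 4) = C + M / 4 := by field_simp
    linarith
  rw [← le_inv_mul_iff₀ (by positivity)]
  linarith

lemma intervalIntegrable_integral {g : ℝ → ℝ → ℝ} {a b : ℝ} (hab : a ≤ b)
    (hg : Integrable ↿g (slab a b)) : IntervalIntegrable (fun t => ∫ x, g t x) volume a b :=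
  (intervalIntegrable_iff_integrableOn_Ioc_of_le hab).2 hg.integral_prod_left

lemma intervalIntegrable_moment {g : ℝ → ℝ → ℝ} {a b : ℝ} {k : ℕ} (hab : a ≤ b)
    (hg : Integrable (fun q => (1 + |q.2|) ^ k * g q.1 q.2) (slab a b)) :
    IntervalIntegrable (moment k g) volume a b :=
  intervalIntegrable_integral (g := fun t x => x ^ k * g t x) hab
    (integrable_pow_mul measurable_snd hg)

/-- The variance `M S - P²` of the mass density, where `M`, `P` and `S` are its moments of order
zero, one and two; it is `M²` times the variance of the normalized density. -/
noncomputable def massVariance (u : ℝ → ℝ → ℝ) (t : ℝ) : ℝ :=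
  mass u t * moment 2 (u ^ 2) t - moment 1 (u ^ 2) t ^ 2

/-- The displacement `E P - M Q` of the center of mass `P / M` from the center of energy `Q / E`,
scaled by `M E`. -/
noncomputable def centerGap (p : ℝ) (u : ℝ → ℝ → ℝ) (t : ℝ) : ℝ :=
  energy p u t * moment 1 (u ^ 2) t - mass u t * moment 1 (energyDensity p u) t

namespace IsGKdVSolution

variable {p : ℝ} {u : ℝ → ℝ → ℝ} (hu : IsGKdVSolution p u)

section

include hu

lemma integrable_pow_mul_sq (k : ℕ) (t : ℝ) : Integrable fun x => x ^ k * u t x ^ 2 :=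
  integrable_pow_mul (X := fun x => x) measurable_id (hu.integrable_sq k t)

lemma integrable_sub_sq_mul_sq (c d t : ℝ) :
    Integrable fun x => (c * x - d) ^ 2 * u t x ^ 2 := by
  refine ((((hu.integrable_pow_mul_sq 2 t).const_mul (c ^ 2)).sub
    ((hu.integrable_pow_mul_sq 1 t).const_mul (2 * c * d))).add
    ((hu.integrable_pow_mul_sq 0 t).const_mul (d ^ 2))).congr (.of_forall fun x => ?_)
  simp only [Pi.add_apply, Pi.sub_apply]
  ring

lemma integral_sub_sq_mul_sq (c d t : ℝ) : ∫ x, (c * x - d) ^ 2 * u t x ^ 2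
    = c ^ 2 * moment 2 (u ^ 2) t - 2 * c * d * moment 1 (u ^ 2) t + d ^ 2 * mass u t := by
  have h₂ := (hu.integrable_pow_mul_sq 2 t).const_mul (c ^ 2)
  have h₁ := (hu.integrable_pow_mul_sq 1 t).const_mul (2 * c * d)
  have h₀ : Integrable fun x => d ^ 2 * u t x ^ 2 := by
    simpa using (hu.integrable_pow_mul_sq 0 t).const_mul (d ^ 2)
  have hsub : Integrable fun x => c ^ 2 * (x ^ 2 * u t x ^ 2) - 2 * c * d * (x ^ 1 * u t x ^ 2) :=
    h₂.sub h₁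
  simp only [moment, mass, Pi.pow_apply]
  rw [← integral_const_mul, ← integral_const_mul, ← integral_const_mul, ← integral_sub h₂ h₁,
    ← integral_add hsub h₀]
  congr with x
  ring

lemma massVariance_nonneg (t : ℝ) : 0 ≤ massVariance u t := by
  have hcu : Continuous fun x => u t x := hu.spaceSmooth.continuous_slice t
  have h := sq_integral_mul_le (μ := volume) (f := fun x => u t x) (g := fun x => x * u t x)
    (by fun_prop) (by fun_prop) (by simpa using hu.integrable_pow_mul_sq 0 t)
    (by simpa only [mul_pow] using hu.integrable_pow_mul_sq 2 t)
  rw [massVariance, sub_nonneg]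
  refine Eq.trans_le ?_ (h.trans_eq ?_)
  · simp only [moment, pow_one, Pi.pow_apply, mul_left_comm (u t _), ← sq]
  · simp only [mass, moment, mul_pow, Pi.pow_apply]

lemma massVariance_le (t y : ℝ) :
    massVariance u t ≤ mass u t * ∫ x, (x - y) ^ 2 * u t x ^ 2 := by
  have h := hu.integral_sub_sq_mul_sq 1 y t
  simp only [one_mul] at h
  rw [h, massVariance]
  linarith [sq_nonneg (moment 1 (u ^ 2) t - y * mass u t)]

end

variable (hp : 1 < p) {a b : ℝ} (hab : a ≤ b)
include hu hp hab

lemma intervalIntegrable_moment_massFlux {k : ℕ} (hk : k ≤ 2) :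
    IntervalIntegrable (moment k (massFlux p u)) volume a b :=
  intervalIntegrable_moment hab <| integrable_one_add_abs_pow_mul_of_le hk measurable_snd <|
    hu.integrable_slab_sq_mul_massFlux hp (fun t _ => hu.mass_add_energy_le hp t) hab

lemma intervalIntegrable_moment_zero_energyFlux :
    IntervalIntegrable (moment 0 (energyFlux p u)) volume a b :=
  intervalIntegrable_moment hab <| by
    simpa using! hu.integrable_slab_energyFlux hp (fun t _ => hu.mass_add_energy_le hp t) hab

lemma moment_mass_sub {k : ℕ} (hk : k ≤ 2) : moment k (u ^ 2) b - moment k (u ^ 2) a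
    = -(k * ∫ t in a..b, moment (k - 1) (massFlux p u) t) := by
  have hC := fun t (_ : t ∈ Icc a b) => hu.mass_add_energy_le hp t
  exact (hu.isBalanceLaw_mass hp).moment_sub hab hk (hu.integrable_sq k a) (hu.integrable_sq k b)
    (hu.integrable_slab_sq hp hC)
    (integrable_one_add_abs_pow_mul_of_le (by lia) measurable_snd
      (hu.integrable_slab_sq_mul_massFlux hp hC hab))

lemma moment_one_energyDensity_sub :
    moment 1 (energyDensity p u) b - moment 1 (energyDensity p u) a
      = -∫ t in a..b, moment 0 (energyFlux p u) t := by
  have hC := fun t (_ : t ∈ Icc a b) => hu.mass_add_energy_le hp t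
  simpa using (hu.isBalanceLaw_energy hp).moment_sub hab one_le_two
    (hu.integrable_energyDensity hp 1 a) (hu.integrable_energyDensity hp 1 b)
    (hu.integrable_slab_energyDensity hp hC)
    (by simpa using! hu.integrable_slab_energyFlux hp hC hab)

lemma intervalIntegrable_centerGap_flux :
    IntervalIntegrable (fun t => mass u t * moment 0 (energyFlux p u) t
      - energy p u t * moment 0 (massFlux p u) t) volume a b := by
  simp only [hu.mass_eq hp _, hu.energy_eq hp _]
  exact ((hu.intervalIntegrable_moment_zero_energyFlux hp hab).const_mul _).sub
    ((hu.intervalIntegrable_moment_massFlux hp hab (Nat.zero_le 2)).const_mul _)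

lemma intervalIntegrable_variance_flux (P : ℝ) :
    IntervalIntegrable (fun t => P * moment 0 (massFlux p u) t
      - 2 * mass u t * moment 1 (massFlux p u) t) volume a b := by
  simp only [hu.mass_eq hp _]
  exact ((hu.intervalIntegrable_moment_massFlux hp hab (Nat.zero_le 2)).const_mul _).sub
    ((hu.intervalIntegrable_moment_massFlux hp hab one_le_two).const_mul _)

lemma centerGap_sub : centerGap p u b - centerGap p u a
    = ∫ t in a..b, (mass u t * moment 0 (energyFlux p u) t
      - energy p u t * moment 0 (massFlux p u) t) := by
  have hP := hu.moment_mass_sub hp hab one_le_two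
  have hQ := hu.moment_one_energyDensity_sub hp hab
  simp only [centerGap, hu.mass_eq hp _, hu.energy_eq hp _]
  rw [intervalIntegral.integral_sub
      ((hu.intervalIntegrable_moment_zero_energyFlux hp hab).const_mul _)
      ((hu.intervalIntegrable_moment_massFlux hp hab (Nat.zero_le 2)).const_mul _),
    intervalIntegral.integral_const_mul, intervalIntegral.integral_const_mul]
  simp only [Nat.cast_one, one_mul, Nat.sub_self] at hP
  linear_combination energy p u 0 * hP - mass u 0 * hQ

lemma massVariance_sub : massVariance u b - massVariance u a
    = ∫ t in a..b, ((moment 1 (u ^ 2) a + moment 1 (u ^ 2) b) * moment 0 (massFlux p u) t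
      - 2 * mass u t * moment 1 (massFlux p u) t) := by
  have hP := hu.moment_mass_sub hp hab one_le_two
  have hS := hu.moment_mass_sub hp hab le_rfl
  simp only [massVariance, hu.mass_eq hp _]
  rw [intervalIntegral.integral_sub
      ((hu.intervalIntegrable_moment_massFlux hp hab (Nat.zero_le 2)).const_mul _)
      ((hu.intervalIntegrable_moment_massFlux hp hab one_le_two).const_mul _),
    intervalIntegral.integral_const_mul, intervalIntegral.integral_const_mul]
  simp only [Nat.cast_one, Nat.cast_ofNat, one_mul, Nat.sub_self, Nat.add_one_sub_one] at hP hS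
  linear_combination mass u 0 * hS - (moment 1 (u ^ 2) a + moment 1 (u ^ 2) b) * hP

end IsGKdVSolution

/-! ### Growth of the variance -/

lemma moment_zero_massFlux_nonneg {p : ℝ} (hp : 1 < p) (u : ℝ → ℝ → ℝ) (t : ℝ) :
    0 ≤ moment 0 (massFlux p u) t := by
  rw [moment_zero]
  exact integral_nonneg (massFlux_nonneg hp u t)

namespace IsGKdVSolution

variable {p : ℝ} {u : ℝ → ℝ → ℝ} (hu : IsGKdVSolution p u) (hp : 1 < p)
include hu hp

lemma moment_zero_massFlux_le (t : ℝ) :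
    moment 0 (massFlux p u) t ≤ (6 + 2 * p) * energy p u 0 := by
  rw [moment_zero, ← hu.energy_eq hp t, energy, ← integral_const_mul]
  exact integral_mono (by simpa using hu.integrable_massFlux hp 0 t)
    (.const_mul (by simpa using hu.integrable_energyDensity hp 0 t) _)
    (massFlux_le_energyDensity hp u t)

lemma moment_one_mass_antitone : Antitone (moment 1 (u ^ 2)) := fun a b hab => by
  have h := hu.moment_mass_sub hp hab one_le_two
  have := intervalIntegral.integral_nonneg (μ := volume) hab fun t _ =>
    moment_zero_massFlux_nonneg hp u t
  simp only [Nat.cast_one, one_mul, Nat.sub_self] at h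
  linarith

lemma moment_one_mass_sub_le {a b : ℝ} (hab : a ≤ b) :
    moment 1 (u ^ 2) a - moment 1 (u ^ 2) b ≤ (6 + 2 * p) * energy p u 0 * (b - a) := by
  have h := hu.moment_mass_sub hp hab one_le_two
  have := intervalIntegral.integral_mono_on hab
    (hu.intervalIntegrable_moment_massFlux hp hab (Nat.zero_le 2)) intervalIntegrable_const
    fun t _ => hu.moment_zero_massFlux_le hp t
  rw [intervalIntegral.integral_const, smul_eq_mul] at this
  simp only [Nat.cast_one, one_mul, Nat.sub_self] at h
  linarith

lemma integrable_pow_mul_mul_nonlinearity (k : ℕ) (t : ℝ) :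
    Integrable fun x => x ^ k * (u * nonlinearity p u) t x :=
  integrable_pow_mul (X := fun x => x) measurable_id (hu.integrable_mul_nonlinearity hp k t)

lemma moment_massFlux_eq_add (k : ℕ) (t : ℝ) :
    moment k (massFlux p u) t = 6 * moment k (energyDensity p u) t
      + (2 * p - 6) / (p + 1) * moment k (u * nonlinearity p u) t := by
  have hp₁ : p + 1 ≠ 0 := by linarith
  have he := integrable_pow_mul (X := fun x => x) measurable_id (hu.integrable_energyDensity hp k t)
  have hb := hu.integrable_pow_mul_mul_nonlinearity hp k t
  simp only [moment]
  rw [← integral_const_mul, ← integral_const_mul, ← integral_add (he.const_mul 6) (hb.const_mul _)]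
  congr with x
  simp only [massFlux, energyDensity, Pi.add_apply, Pi.smul_apply, smul_eq_mul]
  field_simp
  ring

lemma variance_flux_eq (t : ℝ) :
    2 * moment 1 (u ^ 2) t * moment 0 (massFlux p u) t - 2 * mass u t * moment 1 (massFlux p u) t
      = 12 * centerGap p u t + 2 * ((2 * p - 6) / (p + 1)) *
        (moment 1 (u ^ 2) t * moment 0 (u * nonlinearity p u) t
          - mass u t * moment 1 (u * nonlinearity p u) t) := by
  rw [hu.moment_massFlux_eq_add hp, hu.moment_massFlux_eq_add hp, centerGap,
    show energy p u t = moment 0 (energyDensity p u) t from (moment_zero _ t).symm]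
  ring

lemma abs_moment_mul_sub_le {Λ : ℝ} (hΛ : ∀ t x, |u t x| ^ (p - 1) ≤ Λ) (t : ℝ) :
    |moment 1 (u ^ 2) t * moment 0 (u * nonlinearity p u) t
      - mass u t * moment 1 (u * nonlinearity p u) t|
      ≤ Λ / 2 * (mass u t * (1 + massVariance u t)) := by
  have hb₀ := (hu.integrable_pow_mul_mul_nonlinearity hp 0 t).const_mul (moment 1 (u ^ 2) t)
  have hb₁ := (hu.integrable_pow_mul_mul_nonlinearity hp 1 t).const_mul (mass u t)
  have hu₂ : Integrable fun x => u t x ^ 2 := by simpa using hu.integrable_pow_mul_sq 0 t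
  have hvar := hu.integrable_sub_sq_mul_sq (mass u t) (moment 1 (u ^ 2) t) t
  have hmass : mass u t * (1 + massVariance u t) = ∫ x, (u t x ^ 2
      + (mass u t * x - moment 1 (u ^ 2) t) ^ 2 * u t x ^ 2) := by
    rw [integral_add hu₂ hvar, hu.integral_sub_sq_mul_sq, ← mass, massVariance]
    ring
  set P := moment 1 (u ^ 2) t
  set M := mass u t
  rw [hmass, moment, moment, ← integral_const_mul, ← integral_const_mul, ← integral_const_mul,
    ← integral_sub hb₀ hb₁]
  refine norm_integral_le_of_norm_le (G := ℝ) ((hu₂.add hvar).const_mul _) (.of_forall fun x => ?_)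
  have hamgm : |P - M * x| ≤ 1 / 2 * (1 + (M * x - P) ^ 2) := by
    rw [abs_le]
    constructor <;> nlinarith [sq_nonneg (M * x - P - 1), sq_nonneg (M * x - P + 1)]
  calc ‖P * (x ^ 0 * (u * nonlinearity p u) t x) - M * (x ^ 1 * (u * nonlinearity p u) t x)‖
      = |P - M * x| * (|u t x| ^ (p - 1) * u t x ^ 2) := by
        rw [mul_nonlinearity_apply, ← abs_of_nonneg
          (by positivity : 0 ≤ |u t x| ^ (p - 1) * u t x ^ 2), ← abs_mul, norm_eq_abs,
          abs_of_nonneg (by positivity : 0 ≤ |u t x| ^ (p - 1) * u t x ^ 2)]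
        ring_nf
    _ ≤ 1 / 2 * (1 + (M * x - P) ^ 2) * (Λ * u t x ^ 2) := by
        gcongr
        exact hΛ t x
    _ = Λ / 2 * (u t x ^ 2 + (M * x - P) ^ 2 * u t x ^ 2) := by ring

lemma exists_variance_flux_ge (V : ℝ) : ∃ R, ∀ t, massVariance u t ≤ V → 12 * centerGap p u t - R
    ≤ 2 * moment 1 (u ^ 2) t * moment 0 (massFlux p u) t
      - 2 * mass u t * moment 1 (massFlux p u) t := by
  obtain ⟨Λ, hΛ₀, hΛ⟩ := hu.exists_forall_abs_rpow_le hp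
  set c := 2 * ((2 * p - 6) / (p + 1))
  refine ⟨|c| * (Λ / 2 * (mass u 0 * (1 + V))), fun t hV => ?_⟩
  have herr : |c * (moment 1 (u ^ 2) t * moment 0 (u * nonlinearity p u) t
      - mass u t * moment 1 (u * nonlinearity p u) t)|
      ≤ |c| * (Λ / 2 * (mass u 0 * (1 + V))) := by
    rw [abs_mul]
    gcongr
    refine (hu.abs_moment_mul_sub_le hp hΛ t).trans ?_
    rw [hu.mass_eq hp t]
    have := mass_nonneg u 0
    gcongr
  rw [hu.variance_flux_eq hp]
  linarith [(abs_le.1 herr).1]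

lemma sub_le_massVariance_sub {s L : ℝ}
    (hL : ∀ t ∈ Icc s (s + 1), L ≤ 2 * moment 1 (u ^ 2) t * moment 0 (massFlux p u) t
      - 2 * mass u t * moment 1 (massFlux p u) t) :
    L - ((6 + 2 * p) * energy p u 0) ^ 2 ≤ massVariance u (s + 1) - massVariance u s := by
  have hs : s ≤ s + 1 := by linarith
  set K := (6 + 2 * p) * energy p u 0
  have hK : 0 ≤ K := (moment_zero_massFlux_nonneg hp u 0).trans (hu.moment_zero_massFlux_le hp 0)
  have hbound : ∀ t ∈ Icc s (s + 1), L - K ^ 2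
      ≤ (moment 1 (u ^ 2) s + moment 1 (u ^ 2) (s + 1)) * moment 0 (massFlux p u) t
        - 2 * mass u t * moment 1 (massFlux p u) t := fun t ht => by
    have hP := hu.moment_one_mass_antitone hp ht.1
    have hP' : moment 1 (u ^ 2) t - moment 1 (u ^ 2) (s + 1) ≤ K :=
      (hu.moment_one_mass_sub_le hp ht.2).trans (mul_le_of_le_one_right hK (by linarith [ht.1]))
    have hdrift : (2 * moment 1 (u ^ 2) t - moment 1 (u ^ 2) s - moment 1 (u ^ 2) (s + 1))
        * moment 0 (massFlux p u) t ≤ K * K :=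
      mul_le_mul (by linarith) (hu.moment_zero_massFlux_le hp t)
        (moment_zero_massFlux_nonneg hp u t) hK
    linarith [hL t ht]
  have hinteg := intervalIntegral.integral_mono_on hs intervalIntegrable_const
    (hu.intervalIntegrable_variance_flux hp hs _) hbound
  simpa [hu.massVariance_sub hp hs] using hinteg

lemma centerGap_add_le (hp₃ : √3 ≤ p) {δ : ℝ} (hδ : 0 ≤ δ)
    (hpot : ∀ t, δ ≤ moment 0 (u * nonlinearity p u) t) {a b : ℝ} (hab : a ≤ b) :
    centerGap p u a + (p - 1) ^ 2 / (2 * (p + 1) ^ 2) * δ ^ 2 * (b - a) ≤ centerGap p u b := by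
  have hinteg := intervalIntegral.integral_mono_on hab intervalIntegrable_const
    (hu.intervalIntegrable_centerGap_flux hp hab)
    (fun t _ => le_trans (by gcongr; exact hpot t) (hu.moment_potential_sq_le hp hp₃ t) :
      ∀ t ∈ Icc a b, (p - 1) ^ 2 / (2 * (p + 1) ^ 2) * δ ^ 2 ≤ _)
  rw [intervalIntegral.integral_const, smul_eq_mul, ← hu.centerGap_sub hp hab] at hinteg
  linarith

lemma exists_le_moment_potential (hM : 0 < mass u 0) {C : ℝ} {x₀ : ℝ → ℝ}
    (hC : ∀ t, ∫ x, (x - x₀ t) ^ 2 * u t x ^ 2 ≤ C) :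
    ∃ δ > 0, ∀ t, δ ≤ moment 0 (u * nonlinearity p u) t := by
  have hC₀ : 0 ≤ C := (integral_nonneg fun x => by positivity).trans (hC 0)
  obtain ⟨δ, hδ, h⟩ := exists_forall_le_integral_abs_rpow_mul_sq (sub_nonneg.2 hp.le) hM hC₀
  refine ⟨δ, hδ, fun t => ?_⟩
  have hpot := hu.integrable_pow_mul_mul_nonlinearity hp 0 t
  simp only [moment_zero, mul_nonlinearity_apply, pow_zero, one_mul] at hpot ⊢
  exact h (u t) (x₀ t) (by simpa using hu.integrable_pow_mul_sq 0 t)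
    (by simpa using hu.integrable_sub_sq_mul_sq 1 (x₀ t) t) hpot (hu.mass_eq hp t).ge (hC t)

lemma mass_pos_of_ne_zero (hne : u ≠ 0) : 0 < mass u 0 := by
  obtain ⟨t, ht⟩ := Function.ne_iff.1 hne
  obtain ⟨x, hx⟩ := Function.ne_iff.1 ht
  have hcu : Continuous fun y => u t y ^ 2 := (hu.spaceSmooth.continuous_slice t).pow 2
  rw [← hu.mass_eq hp t, mass, integral_pos_iff_support_of_nonneg (fun y => sq_nonneg _)
    (by simpa using hu.integrable_pow_mul_sq 0 t)]
  exact hcu.isOpen_support.measure_pos volume ⟨x, pow_ne_zero 2 hx⟩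

end IsGKdVSolution

theorem IsGKdVSolution.exists_lt_integral_sub_sq_mul_sq {p : ℝ} {u : ℝ → ℝ → ℝ}
    (hu : IsGKdVSolution p u) (hp₃ : √3 ≤ p) (hne : u ≠ 0) (x₀ : ℝ → ℝ) (C : ℝ) :
    ∃ t, C < ∫ x, (x - x₀ t) ^ 2 * u t x ^ 2 := by
  have hp : 1 < p := ((lt_sqrt zero_le_one).2 (by norm_num)).trans_le hp₃
  have hM := hu.mass_pos_of_ne_zero hp hne
  by_contra! hC
  obtain ⟨δ, hδ, hpot⟩ := hu.exists_le_moment_potential hp hM hC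
  have hV : ∀ t, massVariance u t ≤ mass u 0 * C := fun t =>
    (hu.massVariance_le t (x₀ t)).trans <| by
      rw [hu.mass_eq hp t]
      exact mul_le_mul_of_nonneg_left (hC t) hM.le
  obtain ⟨R, hR⟩ := hu.exists_variance_flux_ge hp (mass u 0 * C)
  set κ := (p - 1) ^ 2 / (2 * (p + 1) ^ 2) * δ ^ 2
  have hκ : 0 < κ := by
    have : 0 < p - 1 := sub_pos.2 hp
    positivity
  have hstep : ∀ s ≥ 0, 12 * (centerGap p u 0 + κ * s) - R - ((6 + 2 * p) * energy p u 0) ^ 2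
      ≤ mass u 0 * C := fun s hs => by
    have hinc := hu.sub_le_massVariance_sub hp
      (L := 12 * (centerGap p u 0 + κ * s) - R) (s := s) fun t ht => by
        have hgap := hu.centerGap_add_le hp hp₃ hδ.le hpot (hs.le.trans ht.1)
        have := mul_le_mul_of_nonneg_left ht.1 hκ.le
        linarith [hR t (hV t)]
    linarith [hV (s + 1), hu.massVariance_nonneg s]
  obtain ⟨n, hn⟩ := exists_nat_gt ((mass u 0 * C + R + ((6 + 2 * p) * energy p u 0) ^ 2
    - 12 * centerGap p u 0) / (12 * κ))
  rw [div_lt_iff₀ (by positivity)] at hn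
  linarith [hstep n n.cast_nonneg]

end GKdV

/-- **Second-moment dispersion estimate.** For `p ≥ √3` and a nonzero global Schwartz
solution `u` of the defocusing gKdV equation, for any choice of center function `x(t)`
the second moment of the mass density about `x(t)` is unbounded in time:
`sup_{t} ∫ (x − x(t))² u²(t,x) dx = ∞`. -/
theorem second_moment_dispersion
    (p : ℝ) (hp : Real.sqrt 3 ≤ p)
    (u : ℝ → ℝ → ℝ)
    (hsmooth : ContDiff ℝ (⊤ : ℕ∞) (fun q : ℝ × ℝ => u q.1 q.2))
    (hschwartz : ∀ t : ℝ, ∃ f : SchwartzMap ℝ ℝ, ∀ x : ℝ, u t x = f x)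
    (hpde : ∀ t x : ℝ,
      deriv (fun s => u s x) t + iteratedDeriv 3 (fun y => u t y) x
        = deriv (fun y => |u t y| ^ (p - 1) * u t y) x)
    (hnz : u ≠ 0)
    (x₀ : ℝ → ℝ) :
    ∀ C : ℝ, ∃ t : ℝ, C < ∫ x : ℝ, (x - x₀ t) ^ 2 * (u t x) ^ 2 := by
  intro C
  have hu : GKdV.IsGKdVSolution p u := ⟨hsmooth, hschwartz, hpde⟩
  exact hu.exists_lt_integral_sub_sq_mul_sq hp hnz x₀ C
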